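/- arXiv:1410.6081 — 3 statements merged into one kernel-verified Lean document; each statement's English description precedes it below -/
import Mathlib

section
/- 𝔱_Θ = 𝔱: the least cardinality of a ⊆*-chain of thick subsets of ℕ with no thick ⊆*-lower bound equals the least cardinality of a ⊆*-chain of infinite subsets of ℕ with no infinite pseudo-intersection. -/
open Filter Set Topology

noncomputable section

/-- `βℕ`: the space of ultrafilters on `ℕ` (the Stone–Čech compactification of `ℕ`). -/
abbrev βN := Ultrafilter ℕ

/-- `ℕ* = βℕ ∖ ℕ`: the free (nonprincipal) ultrafilters, i.e. those containing
every cofinite set. -/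
def NStar : Set βN := {p | (p : Filter ℕ) ≤ Filter.cofinite}

/-- The shift map `σ : βℕ → βℕ`, the pushforward under `n ↦ n + 1`. -/
def shift (p : βN) : βN := p.map (· + 1)

/-- Addition on `βℕ`: `A ∈ p + q ↔ {n | A − n ∈ p} ∈ q`, where `A − n = {m | m + n ∈ A}`. -/
def addU (p q : βN) : βN := q.bind fun n => p.map (· + n)

/-- A right ideal of `(βℕ, +)`: `I + βℕ ⊆ I`. -/
def IsRightIdeal (I : Set βN) : Prop := ∀ p ∈ I, ∀ q : βN, addU p q ∈ I

/-- A minimal right ideal: a nonempty right ideal not properly containing any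
other (nonempty) right ideal. -/
def IsMinRightIdeal (I : Set βN) : Prop :=
  I.Nonempty ∧ IsRightIdeal I ∧
    ∀ J : Set βN, J.Nonempty → IsRightIdeal J → J ⊆ I → J = I

/-- `A* = {p ∈ ℕ* | A ∈ p}`, as a subset of the subspace `ℕ*`. -/
def starSet (A : Set ℕ) : Set ↥NStar := {p | A ∈ (p : βN)}

/-- `F* = ⋂_{A ∈ F} A*` for a (free) filter `F` on `ℕ`. -/
def filterStar (F : Filter ℕ) : Set βN := ⋂ A ∈ F, {p : βN | A ∈ p}

/-- A closed `P`-set of the space `ℕ*`: for every countable collection of open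
sets containing `X`, `X` is contained in the interior of the intersection. -/
def IsPSetSub (X : Set ↥NStar) : Prop :=
  IsClosed X ∧ ∀ 𝒜 : Set (Set ↥NStar), 𝒜.Countable →
    (∀ U ∈ 𝒜, IsOpen U ∧ X ⊆ U) → X ⊆ interior (⋂₀ 𝒜)

/-- A subset of `βℕ` which lies in `ℕ*` and is a closed `P`-set of `ℕ*`. -/
def IsPSetIn (X : Set βN) : Prop :=
  X ⊆ NStar ∧ IsPSetSub (Subtype.val ⁻¹' X)

/-- `A ⊆ ℕ` is thick if it contains arbitrarily long intervals. -/
def Thick (A : Set ℕ) : Prop := ∀ k : ℕ, ∃ n : ℕ, Set.Icc n (n + k) ⊆ A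

/-- `A ⊆* B`: `A ∖ B` is finite. -/
def almostSub (A B : Set ℕ) : Prop := (A \ B).Finite

/-- The tower number `𝔱`: the least cardinality of a `⊆*`-chain of infinite subsets
of `ℕ` with no infinite pseudo-intersection. -/
def towerNum : Cardinal :=
  sInf {c : Cardinal | ∃ C : Set (Set ℕ), c = Cardinal.mk ↥C ∧ (∀ A ∈ C, A.Infinite) ∧
    IsChain almostSub C ∧ ¬∃ B : Set ℕ, B.Infinite ∧ ∀ A ∈ C, almostSub B A}

/-- `𝔱_Θ`: the least cardinality of a `⊆*`-chain of thick subsets of `ℕ` with no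
thick `⊆*`-lower bound. -/
def towerNumTheta : Cardinal :=
  sInf {c : Cardinal | ∃ C : Set (Set ℕ), c = Cardinal.mk ↥C ∧ (∀ A ∈ C, Thick A) ∧
    IsChain almostSub C ∧ ¬∃ B : Set ℕ, Thick B ∧ ∀ A ∈ C, almostSub B A}

/-- The pseudo-intersection number `𝔭`: the least cardinality of a filter base of
infinite subsets of `ℕ` (all finite intersections infinite) with no infinite
pseudo-intersection. -/
def pNum : Cardinal :=
  sInf {c : Cardinal | ∃ C : Set (Set ℕ), c = Cardinal.mk ↥C ∧
    (∀ S : Finset (Set ℕ), ↑S ⊆ C → (⋂ A ∈ S, A : Set ℕ).Infinite) ∧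
    ¬∃ B : Set ℕ, B.Infinite ∧ ∀ A ∈ C, almostSub B A}

/-- Chain transitivity for a dynamical system on a topological space, via open
covers: for every open cover `𝒰` and all `x, y` there is a `𝒰`-chain from `x` to `y`. -/
def ChainTransitive {X : Type*} [TopologicalSpace X] (f : X → X) : Prop :=
  ∀ 𝒰 : Set (Set X), (∀ U ∈ 𝒰, IsOpen U) → ⋃₀ 𝒰 = Set.univ →
    ∀ x y : X, ∃ (n : ℕ) (c : ℕ → X), c 0 = x ∧ c n = y ∧
      ∀ i < n, ∃ U ∈ 𝒰, f (c i) ∈ U ∧ c (i + 1) ∈ U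

lemma shift_mem_NStar {p : βN} (hp : p ∈ NStar) : shift p ∈ NStar := by
  have h1 : Filter.Tendsto (· + 1) Filter.cofinite Filter.cofinite :=
    Function.Injective.tendsto_cofinite (add_left_injective 1)
  simp only [NStar, Set.mem_setOf_eq, shift, Ultrafilter.coe_map] at *
  exact (Filter.map_mono hp).trans h1

/-- The shift map restricted to `ℕ*`. -/
def shiftStar (p : ↥NStar) : ↥NStar := ⟨shift p.1, shift_mem_NStar p.2⟩

lemma chain_tot {C : Set (Set ℕ)} (hch : IsChain almostSub C) {A B : Set ℕ} (hA : A ∈ C)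
    (hB : B ∈ C) : almostSub A B ∨ almostSub B A := by
  by_cases h : A = B
  · subst h; left; simp [almostSub]
  · exact hch hA hB h

lemma almostSub_iff (X Y : Set ℕ) : almostSub X Y ↔ ∃ N, ∀ x ∈ X, N ≤ x → x ∈ Y := by
  unfold almostSub
  constructor
  · intro h
    obtain ⟨N, hN⟩ := h.bddAbove
    refine ⟨N + 1, fun x hx hle => ?_⟩
    by_contra hy
    have := hN ⟨hx, hy⟩
    omega
  · rintro ⟨N, hN⟩
    refine (Set.finite_lt_nat N).subset ?_
    rintro x ⟨hx, hy⟩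
    by_contra hlt
    exact hy (hN x hx (by simpa using hlt))

lemma inf_iff (X : Set ℕ) : X.Infinite ↔ ∀ n, ∃ x ∈ X, n < x :=
  ⟨fun h n => h.exists_gt n, fun h => Set.infinite_of_forall_exists_gt h⟩

lemma almostSub_trans' {X Y Z : Set ℕ} (h : almostSub X Y) (h' : almostSub Y Z) :
    almostSub X Z := by
  rw [almostSub_iff] at *
  obtain ⟨N, hN⟩ := h
  obtain ⟨M, hM⟩ := h'
  exact ⟨max N M, fun x hx hle => hM x (hN x hx (by omega)) (by omega)⟩

lemma sparse_exists (F : ℕ → ℕ) (hF : Monotone F) (X : Set ℕ) (hX : X.Infinite) :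
    ∃ Y ⊆ X, Y.Infinite ∧ ∀ x ∈ Y, ∀ y ∈ Y, x < y → F x < y := by
  have h : ∀ n, ∃ y ∈ X, n < y ∧ F n < y := by
    intro n
    obtain ⟨y, hy, h⟩ := (inf_iff X).1 hX (max n (F n))
    exact ⟨y, hy, by omega, by omega⟩
  choose s hsX hs hsF using h
  let x : ℕ → ℕ := fun n => s^[n + 1] 0
  have hx1 : ∀ n, x (n + 1) = s (x n) := fun n => Function.iterate_succ_apply' s (n + 1) 0
  have hmono : StrictMono x := strictMono_nat_of_lt_succ fun n => by rw [hx1]; exact hs _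
  refine ⟨Set.range x, ?_, Set.infinite_range_of_injective hmono.injective, ?_⟩
  · rintro _ ⟨n, rfl⟩
    have : x n = s (s^[n] 0) := Function.iterate_succ_apply' s n 0
    rw [this]; exact hsX _
  · rintro _ ⟨n, rfl⟩ _ ⟨m, rfl⟩ hlt
    have hnm : n < m := hmono.lt_iff_lt.1 hlt
    calc F (x n) < x (n + 1) := by rw [hx1]; exact hsF _
      _ ≤ x m := hmono.monotone hnm

/-- Families indexed by `ι` which are chains have pseudo-intersections. -/
def GoodIdx (κ : Cardinal.{0}) : Prop := ∀ (ι : Type) (T : ι → Set ℕ), Cardinal.mk ι ≤ κ →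
  (∀ i, (T i).Infinite) → (∀ i j, almostSub (T i) (T j) ∨ almostSub (T j) (T i)) →
  ∃ B : Set ℕ, B.Infinite ∧ ∀ i, almostSub B (T i)

lemma dominate {κ : Cardinal.{0}} (H : GoodIdx κ) (ι : Type) (hι : Cardinal.mk ι ≤ κ)
    (f : ι → ℕ → ℕ) : ∃ g : ℕ → ℕ, ∀ i, ∃ N, ∀ n ≥ N, f i n ≤ g n := by
  classical
  let F : ι → ℕ → ℕ := fun i => partialSups (f i)
  have hFm : ∀ i, Monotone (F i) := fun i => (partialSups (f i)).monotone
  have hfF : ∀ i n, f i n ≤ F i n := fun i n => le_partialSups (f i) n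
  obtain ⟨r, hr⟩ : ∃ r : ι → ι → Prop, IsWellOrder ι r := ⟨WellOrderingRel, inferInstance⟩
  let Q : (c : ι) → ((d : ι) → r d c → Set ℕ) → Set ℕ → Prop := fun c p X =>
    X.Infinite ∧ (∀ x ∈ X, ∀ y ∈ X, x < y → F c x < y) ∧ ∀ d (h : r d c), almostSub X (p d h)
  let T : ι → Set ℕ := hr.wf.fix fun c p => if h : ∃ X, Q c p X then h.choose else ∅
  have hT : ∀ c, T c = if h : ∃ X, Q c (fun d _ => T d) X then h.choose else ∅ :=
    fun c => hr.wf.fix_eq _ c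
  have hQ : ∀ c, Q c (fun d _ => T d) (T c) := by
    intro c
    induction c using hr.wf.induction with
    | _ c ih =>
    have hex : ∃ X, Q c (fun d _ => T d) X := by
      obtain ⟨B, hB, hBT⟩ := H {d // r d c} (fun d => T d.1)
        ((Cardinal.mk_subtype_le _).trans hι) (fun d => (ih d.1 d.2).1) (by
          rintro ⟨d, hd⟩ ⟨e, he⟩
          rcases trichotomous_of r d e with h | h | h
          · exact Or.inr ((ih e he).2.2 d h)
          · subst h; left; simp [almostSub]
          · exact Or.inl ((ih d hd).2.2 e h))
      obtain ⟨Y, hYB, hY, hsp⟩ := sparse_exists (F c) (hFm c) B hB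
      refine ⟨Y, hY, hsp, fun d hd => ?_⟩
      exact (hBT ⟨d, hd⟩).subset (Set.diff_subset_diff_left hYB)
    rw [hT c, dif_pos hex]
    exact hex.choose_spec
  obtain ⟨X, hX, hXT⟩ := H ι T hι (fun i => (hQ i).1) (by
    intro d e
    rcases trichotomous_of r d e with h | h | h
    · exact Or.inr ((hQ e).2.2 d h)
    · subst h; left; simp [almostSub]
    · exact Or.inl ((hQ d).2.2 e h))
  choose nx hnX hn using (inf_iff X).1 hX
  refine ⟨fun n => nx (nx n), fun i => ?_⟩
  obtain ⟨N, hN⟩ := (almostSub_iff _ _).1 (hXT i)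
  refine ⟨N, fun n hle => ?_⟩
  have h1 := hn n
  have h2 := hn (nx n)
  have h3 := (hQ i).2.1 (nx n) (hN _ (hnX _) (by omega)) (nx (nx n)) (hN _ (hnX _) (by omega)) h2
  have h4 := hfF i n
  have h5 := hFm i h1.le
  show f i n ≤ nx (nx n)
  omega

lemma thick_of_good {κ : Cardinal.{0}} (H : GoodIdx κ) (C : Set (Set ℕ))
    (hC : Cardinal.mk C ≤ κ) (hth : ∀ A ∈ C, Thick A) (hch : IsChain almostSub C) :
    ∃ B : Set ℕ, Thick B ∧ ∀ A ∈ C, almostSub B A := by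
  have hD : ∀ k (A B : Set ℕ), almostSub A B →
      almostSub {m | Set.Icc m (m + k) ⊆ A} {m | Set.Icc m (m + k) ⊆ B} := by
    intro k A B h
    rw [almostSub_iff] at *
    obtain ⟨N, hN⟩ := h
    refine ⟨N, fun m hm hle x hx => hN x (hm hx) (hle.trans hx.1)⟩
  have hP : ∀ k : ℕ, ∃ P : Set ℕ, P.Infinite ∧
      ∀ A : C, almostSub P {m | Set.Icc m (m + k) ⊆ A.1} := by
    intro k
    refine H C (fun A => {m | Set.Icc m (m + k) ⊆ A.1}) hC ?_ ?_
    · rintro ⟨A, hA⟩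
      rw [inf_iff]
      intro N
      obtain ⟨n, hn⟩ := hth A hA (k + N + 1)
      refine ⟨n + N + 1, fun x hx => hn ?_, by omega⟩
      simp only [Set.mem_Icc] at *
      omega
    · rintro ⟨A, hA⟩ ⟨B, hB⟩
      rcases chain_tot hch hA hB with h | h
      · exact Or.inl (hD k _ _ h)
      · exact Or.inr (hD k _ _ h)
  choose P hPi hPs using hP
  have hf : ∀ (A : C) (k : ℕ), ∃ N, ∀ m ∈ P k, N ≤ m → Set.Icc m (m + k) ⊆ A.1 :=
    fun A k => (almostSub_iff _ _).1 (hPs k A)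
  choose f hf using hf
  obtain ⟨g, hg⟩ := dominate H C hC f
  choose m hmP hmg using fun k => (inf_iff _).1 (hPi k) (g k)
  refine ⟨⋃ k, Set.Icc (m k) (m k + k), fun k => ⟨m k, Set.subset_iUnion (fun k => Set.Icc (m k) (m k + k)) k⟩, ?_⟩
  intro A hA
  obtain ⟨N, hN⟩ := hg ⟨A, hA⟩
  refine ((Set.finite_lt_nat N).biUnion fun k _ => Set.finite_Icc (m k) (m k + k)).subset ?_
  rintro x ⟨hx, hxA⟩
  obtain ⟨k, hk⟩ := Set.mem_iUnion.1 hx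
  refine Set.mem_biUnion (x := k) ?_ hk
  by_contra hlt
  exact hxA (hf ⟨A, hA⟩ k (m k) (hmP k) ((hN k (by simpa using hlt)).trans (hmg k).le) hk)

lemma sInf_eq_of (S T : Set Cardinal.{0}) (h1 : ∀ c ∈ S, ∃ d ∈ T, d ≤ c)
    (h2 : ∀ c ∈ T, ∃ d ∈ S, d ≤ c) : sInf S = sInf T := by
  rcases S.eq_empty_or_nonempty with h | h
  · have : T = ∅ := by
      rw [Set.eq_empty_iff_forall_notMem]
      intro c hc
      obtain ⟨d, hd, _⟩ := h2 c hc
      simp [h] at hd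
    rw [h, this]
  · have hT : T.Nonempty := by
      obtain ⟨c, hc⟩ := h
      obtain ⟨d, hd, _⟩ := h1 c hc
      exact ⟨d, hd⟩
    apply le_antisymm
    · obtain ⟨d, hd, hle⟩ := h2 _ (csInf_mem hT)
      exact (csInf_le' hd).trans hle
    · obtain ⟨d, hd, hle⟩ := h1 _ (csInf_mem h)
      exact (csInf_le' hd).trans hle

/-- `𝔱_Θ = 𝔱`. -/
theorem stmt4 : towerNumTheta = towerNum := by
  unfold towerNumTheta towerNum
  apply sInf_eq_of
  · rintro c ⟨C, rfl, hth, hch, hno⟩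
    by_contra hcon
    refine hno (thick_of_good (κ := Cardinal.mk C) ?_ C le_rfl hth hch)
    intro ι T hι hinf htot
    by_contra hB
    refine hcon ⟨_, ⟨Set.range T, rfl, ?_, ?_, ?_⟩, Cardinal.mk_range_le.trans hι⟩
    · rintro _ ⟨i, rfl⟩
      exact hinf i
    · rintro _ ⟨i, rfl⟩ _ ⟨j, rfl⟩ _
      exact htot i j
    · rintro ⟨B, hBi, hBs⟩
      exact hB ⟨B, hBi, fun i => hBs _ ⟨i, rfl⟩⟩
  · rintro c ⟨C, rfl, hinf, hch, hno⟩
    refine ⟨_, ⟨(fun A => Nat.sqrt ⁻¹' A) '' C, rfl, ?_, ?_, ?_⟩, Cardinal.mk_image_le⟩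
    · rintro _ ⟨A, hA, rfl⟩ k
      obtain ⟨n, hn, hlt⟩ := (inf_iff A).1 (hinf A hA) k
      refine ⟨n * n, fun x hx => ?_⟩
      have : Nat.sqrt x = n := by
        have hx1 := hx.1
        have hx2 := hx.2
        apply le_antisymm
        · exact Nat.le_of_lt_succ (Nat.sqrt_lt.2 (by nlinarith))
        · exact Nat.le_sqrt.2 hx1
      simpa [this] using hn
    · rintro _ ⟨A, hA, rfl⟩ _ ⟨B, hB, rfl⟩ hne
      have key : ∀ A B : Set ℕ, almostSub A B → almostSub (Nat.sqrt ⁻¹' A) (Nat.sqrt ⁻¹' B) := by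
        intro A B h
        rw [almostSub_iff] at *
        obtain ⟨N, hN⟩ := h
        exact ⟨N * N, fun x hx hle => hN _ hx (Nat.le_sqrt.2 hle)⟩
      rcases chain_tot hch hA hB with h | h
      · exact Or.inl (key _ _ h)
      · exact Or.inr (key _ _ h)
    · rintro ⟨B, hBt, hBs⟩
      refine hno ⟨Nat.sqrt '' B, ?_, fun A hA => ?_⟩
      · rw [inf_iff]
        intro n
        obtain ⟨m, hm⟩ := hBt ((n + 1) * (n + 1))
        exact ⟨_, ⟨m + (n + 1) * (n + 1), hm ⟨by omega, le_rfl⟩, rfl⟩,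
          Nat.le_sqrt.2 (Nat.le_add_left _ _)⟩
      · refine ((hBs _ ⟨A, hA, rfl⟩).image Nat.sqrt).subset ?_
        rintro _ ⟨⟨x, hx, rfl⟩, hxA⟩
        exact ⟨x, ⟨hx, hxA⟩, rfl⟩

end
end

section
/- If 𝔱 = 𝔠, then there exist minimal right ideals I and J of (βℕ, +) such that I is a P-set in ℕ* and J is not a P-set in ℕ*; consequently no autohomeomorphism of ℕ* maps I onto J. -/
open Filter Set Topology

noncomputable section

lemma mem_addU {p q : βN} {A : Set ℕ} :
    A ∈ addU p q ↔ {n | {m | m + n ∈ A} ∈ p} ∈ q := Iff.rfl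

lemma addU_zero (p : βN) : addU p (pure 0) = p := by
  ext A; rw [mem_addU]; simp

lemma addU_assoc (p q r : βN) : addU (addU p q) r = addU p (addU q r) := by
  ext A
  simp only [mem_addU, Set.mem_ofPred_eq]
  simp only [add_assoc]

lemma continuous_addU (p : βN) : Continuous (addU p) := by
  refine ultrafilterBasis_is_basis.continuous_iff.2 ?_
  rintro _ ⟨A, rfl⟩
  exact ultrafilter_isOpen_basic {n | {m | m + n ∈ A} ∈ p}

lemma orbit_closed (p : βN) : IsClosed (Set.range (addU p)) :=
  (isCompact_range (continuous_addU p)).isClosed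

lemma orbit_ideal (p : βN) : IsRightIdeal (Set.range (addU p)) := by
  rintro _ ⟨q, rfl⟩ r
  exact ⟨addU q r, (addU_assoc p q r).symm⟩

/-- closed right ideals contain closed minimal right ideals -/
lemma exists_min {K : Set βN} (hne : K.Nonempty) (hcl : IsClosed K) (hK : IsRightIdeal K) :
    ∃ M ⊆ K, IsClosed M ∧ IsMinRightIdeal M := by
  obtain ⟨M, hMK, hM⟩ := zorn_superset_nonempty
    {L : Set βN | L.Nonempty ∧ IsClosed L ∧ IsRightIdeal L} (by
      intro c hc hch hcne
      refine ⟨⋂₀ c, ⟨?_, ?_, ?_⟩, fun s hs => Set.sInter_subset_of_mem hs⟩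
      · have : Nonempty c := hcne.to_subtype
        refine IsCompact.nonempty_sInter_of_directed_nonempty_isCompact_isClosed
          ?_ (fun s hs => (hc hs).1) (fun s hs => (hc hs).2.1.isCompact)
          (fun s hs => (hc hs).2.1)
        intro x hx y hy
        rcases hch.total hx hy with hxy | hxy
        · exact ⟨x, hx, le_rfl, hxy⟩
        · exact ⟨y, hy, hxy, le_rfl⟩
      · exact isClosed_sInter fun s hs => (hc hs).2.1
      · intro p hp q s hs
        exact (hc hs).2.2 p (hp s hs) q) K ⟨hne, hcl, hK⟩
  refine ⟨M, hMK, hM.1.2.1, hM.1.1, hM.1.2.2, ?_⟩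
  intro J hJne hJ hJM
  obtain ⟨p, hp⟩ := hJne
  have h1 : Set.range (addU p) ⊆ J := by
    rintro _ ⟨q, rfl⟩; exact hJ p hp q
  have h2 := hM.2 (y := Set.range (addU p))
    ⟨⟨_, ⟨pure 0, rfl⟩⟩, orbit_closed p, orbit_ideal p⟩ (h1.trans hJM)
  exact hJM.antisymm (h2.trans h1)

/-- the largest right ideal inside `F*` -/
def KF (F : Filter ℕ) : Set βN := {p | ∀ A ∈ F, ∀ n : ℕ, {m | m + n ∈ A} ∈ p}

lemma KF_closed (F : Filter ℕ) : IsClosed (KF F) := by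
  have : KF F = ⋂ A ∈ F, ⋂ n : ℕ, {p : βN | {m | m + n ∈ A} ∈ p} := by
    ext p; simp [KF]
  rw [this]
  exact isClosed_biInter fun A _ => isClosed_iInter fun n => ultrafilter_isClosed_basic _

lemma KF_ideal (F : Filter ℕ) : IsRightIdeal (KF F) := by
  intro p hp q A hA n
  rw [mem_addU]
  refine Filter.univ_mem' fun j => ?_
  have := hp A hA (j + n)
  simpa [add_assoc] using this

lemma KF_mem {F : Filter ℕ} {p : βN} (hp : p ∈ KF F) {A : Set ℕ} (hA : A ∈ F) : A ∈ p := by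
  simpa using hp A hA 0

lemma KF_nonempty {F : Filter ℕ} (hF : ∀ A ∈ F, Thick A) : (KF F).Nonempty := by
  let G : Filter ℕ :=
    { sets := {B | ∃ A ∈ F, ∃ k : ℕ, {m | ∀ i ≤ k, m + i ∈ A} ⊆ B}
      univ_sets := ⟨Set.univ, Filter.univ_mem, 0, Set.subset_univ _⟩
      sets_of_superset := by
        rintro x y ⟨A, hA, k, h⟩ hxy
        exact ⟨A, hA, k, h.trans hxy⟩
      inter_sets := by
        rintro x y ⟨A, hA, k, h⟩ ⟨A', hA', k', h'⟩
        refine ⟨A ∩ A', Filter.inter_mem hA hA', max k k', fun m hm => ⟨h ?_, h' ?_⟩⟩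
        · exact fun i hi => (hm i (hi.trans (le_max_left _ _))).1
        · exact fun i hi => (hm i (hi.trans (le_max_right _ _))).2 }
  have : G.NeBot := by
    rw [← Filter.forall_mem_nonempty_iff_neBot]
    rintro B ⟨A, hA, k, h⟩
    obtain ⟨n, hn⟩ := hF A hA k
    exact ⟨n, h fun i hi => hn ⟨by omega, by omega⟩⟩
  refine ⟨Ultrafilter.of G, fun A hA n => ?_⟩
  exact Ultrafilter.of_le G ⟨A, hA, n, fun m hm => hm n le_rfl⟩

lemma thick_of_ideal {M : Set βN} (hne : M.Nonempty) (hM : IsRightIdeal M) {A : Set ℕ}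
    (hA : ∀ p ∈ M, A ∈ p) : Thick A := by
  obtain ⟨p, hp⟩ := hne
  intro k
  have h1 : ∀ n : ℕ, {m | m + n ∈ A} ∈ p := by
    intro n
    have := hA _ (hM p hp (pure n))
    rw [mem_addU] at this
    simpa using this
  have h2 : (⋂ i ∈ Finset.range (k + 1), {m | m + i ∈ A}) ∈ p := by
    rw [← Ultrafilter.mem_coe]
    exact (Filter.biInter_finset_mem _).2 fun i _ => h1 i
  obtain ⟨n, hn⟩ := Ultrafilter.nonempty_of_mem h2
  simp only [Set.mem_iInter] at hn
  refine ⟨n, fun m hm => ?_⟩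
  have := hn (m - n) (by simp; have := hm.2; omega)
  have h3 : n + (m - n) = m := by have := hm.1; omega
  simpa [h3] using this

lemma min_of_filter {F : Filter ℕ} (hF : ∀ A ∈ F, Thick A) :
    ∃ M, IsClosed M ∧ IsMinRightIdeal M ∧ ∀ p ∈ M, ∀ A ∈ F, A ∈ p := by
  obtain ⟨M, h1, h2, h3⟩ := exists_min (KF_nonempty hF) (KF_closed F) (KF_ideal F)
  exact ⟨M, h2, h3, fun p hp A hA => KF_mem (h1 hp) hA⟩

lemma thick_diff {A S : Set ℕ} (hA : Thick A) (hS : S.Finite) : Thick (A \ S) := by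
  obtain ⟨N, hN⟩ := hS.bddAbove
  intro k
  obtain ⟨n, hn⟩ := hA (N + 1 + k)
  refine ⟨n + N + 1, fun m hm => ⟨hn ⟨?_, ?_⟩, fun hmS => ?_⟩⟩
  · have := hm.1; omega
  · have := hm.2; omega
  · have := hN hmS; have := hm.1; omega

lemma thick_mono {A B : Set ℕ} (hA : Thick A) (h : A ⊆ B) : Thick B := fun k =>
  (hA k).imp fun _ hn => hn.trans h

lemma thick_almost {A B : Set ℕ} (hA : Thick A) (h : almostSub A B) : Thick B :=
  thick_mono (thick_diff hA h) (by intro x hx; by_contra h2; exact hx.2 ⟨hx.1, h2⟩)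

lemma almostSub_trans {A B C : Set ℕ} (h : almostSub A B) (h' : almostSub B C) :
    almostSub A C := by
  refine (h.union h').subset ?_
  intro x hx
  by_cases hB : x ∈ B
  · exact Or.inr ⟨hB, hx.2⟩
  · exact Or.inl ⟨hx.1, hB⟩

lemma almostSub_of_subset {A B : Set ℕ} (h : A ⊆ B) : almostSub A B := by
  simp [almostSub, Set.sdiff_eq_empty.2 h]

lemma mem_of_almost {A B : Set ℕ} {p : βN} (hp : p ∈ NStar) (h : almostSub A B) (hA : A ∈ p) :
    B ∈ p := by
  have h1 : (A \ B)ᶜ ∈ p := hp h.compl_mem_cofinite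
  filter_upwards [hA, h1] with x hx h2
  by_contra h3
  exact h2 ⟨hx, h3⟩

/-- the non-P-set ideal -/
lemma exists_J : ∃ J, IsMinRightIdeal J ∧ J ⊆ NStar ∧ ¬ IsPSetIn J := by
  let A : ℕ → Set ℕ := fun n => {m | (Nat.unpair (Nat.sqrt m)).1 = n}
  have hA : ∀ n, Thick (A n) := by
    intro n k
    refine ⟨Nat.pair n k * Nat.pair n k, fun m hm => ?_⟩
    have hk := Nat.right_le_pair n k
    have : Nat.sqrt m = Nat.pair n k := by
      have h1 := hm.1
      have h2 := hm.2
      obtain ⟨j, rfl⟩ := Nat.exists_eq_add_of_le h1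
      rw [Nat.sqrt_add_eq]
      omega
    simp [A, this]
  have h1 : ∀ n, ∃ M, IsClosed M ∧ IsMinRightIdeal M ∧ ∀ p ∈ M, ∀ X, almostSub (A n) X → X ∈ p := by
    intro n
    let F : Filter ℕ :=
      { sets := {X | almostSub (A n) X}
        univ_sets := almostSub_of_subset (Set.subset_univ _)
        sets_of_superset := fun h h' => almostSub_trans h (almostSub_of_subset h')
        inter_sets := by
          intro x y hx hy
          simp only [Set.mem_ofPred_eq, almostSub, Set.sdiff_inter] at *
          exact hx.union hy }
    exact min_of_filter (F := F) fun X hX => thick_almost (hA n) hX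
  choose M hMc hMm hMA using h1
  have hMfree : ∀ n, M n ⊆ NStar := by
    intro n p hp X hX
    exact hMA n p hp X (hX.subset fun x hx => hx.2)
  let F : Filter ℕ :=
      { sets := {X | ∃ m, ∀ n ≥ m, ∀ p ∈ M n, X ∈ p}
        univ_sets := ⟨0, fun _ _ _ _ => Filter.univ_mem⟩
        sets_of_superset := fun ⟨m, hm⟩ h' => ⟨m, fun n hn p hp => Filter.mem_of_superset (hm n hn p hp) h'⟩
        inter_sets := by
          rintro x y ⟨m, hm⟩ ⟨m', hm'⟩
          exact ⟨max m m', fun n hn p hp => Filter.inter_mem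
            (hm n ((le_max_left _ _).trans hn) p hp) (hm' n ((le_max_right _ _).trans hn) p hp)⟩ }
  obtain ⟨J, hJc, hJm, hJF⟩ := min_of_filter (F := F) (by
    rintro X ⟨m, hm⟩
    exact thick_of_ideal (hMm m).1 (hMm m).2.1 (hm m le_rfl))
  have hdis : ∀ n, ∀ p ∈ J, p ∉ M n := by
    intro n p hp hpn
    have h1 : (A n)ᶜ ∈ p := by
      refine hJF p hp _ ⟨n + 1, fun k hk q hq => ?_⟩
      refine hMA k q hq _ (almostSub_of_subset ?_)
      intro x hx hx'
      have : k = n := hx.symm.trans hx'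
      omega
    have h2 : A n ∈ p := hMA n p hpn _ (almostSub_of_subset le_rfl)
    exact (Ultrafilter.compl_mem_iff_notMem.1 h1) h2
  refine ⟨J, hJm, fun p hp X hX => hJF p hp X ⟨0, fun n _ q hq => hMfree n hq hX⟩, ?_⟩
  rintro ⟨hJs, -, hP⟩
  obtain ⟨p, hp⟩ := hJm.1
  have := hP (Set.range fun n => (Subtype.val ⁻¹' M n : Set ↥NStar)ᶜ) (Set.countable_range _) (by
    rintro _ ⟨n, rfl⟩
    refine ⟨((hMc n).preimage continuous_subtype_val).isOpen_compl, ?_⟩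
    intro q hq
    exact hdis n q hq) (a := ⟨p, hJs hp⟩) hp
  rw [mem_interior] at this
  obtain ⟨V, hV, hVo, hpV⟩ := this
  obtain ⟨V', hV'o, rfl⟩ := isOpen_induced_iff.1 hVo
  obtain ⟨_, ⟨B, rfl⟩, hpB, hBV⟩ := ultrafilterBasis_is_basis.exists_subset_of_mem_open hpV hV'o
  have hB : Bᶜ ∈ p := by
    refine hJF p hp _ ⟨0, fun n _ q hq => ?_⟩
    rw [Ultrafilter.compl_mem_iff_notMem]
    intro hqB
    have h3 : (⟨q, hMfree n hq⟩ : ↥NStar) ∈ Subtype.val ⁻¹' V' := hBV hqB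
    exact (hV h3 _ ⟨n, rfl⟩) hq
  exact (Ultrafilter.compl_mem_iff_notMem.1 hB) hpB

lemma pset_homeo (e : ↥NStar ≃ₜ ↥NStar) {X : Set ↥NStar} (h : IsPSetSub X) :
    IsPSetSub (e '' X) := by
  refine ⟨(e.isClosed_image).2 h.1, fun 𝒜 hc hU => ?_⟩
  have h1 := h.2 ((fun U => e ⁻¹' U) '' 𝒜) (hc.image _) (by
    rintro _ ⟨U, hU', rfl⟩
    refine ⟨(hU U hU').1.preimage e.continuous, ?_⟩
    exact Set.image_subset_iff.1 (hU U hU').2)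
  rw [Set.image_subset_iff, e.preimage_interior]
  convert h1 using 2
  ext x; simp

lemma tower_lb (h : towerNum = Cardinal.continuum) {ι : Type} (hι : Cardinal.mk ι < Cardinal.continuum)
    (f : ι → Set ℕ) (hf : ∀ i, (f i).Infinite)
    (hc : ∀ i j, almostSub (f i) (f j) ∨ almostSub (f j) (f i)) :
    ∃ B : Set ℕ, B.Infinite ∧ ∀ i, almostSub B (f i) := by
  have h1 : Cardinal.mk (Set.range f) < towerNum := by
    rw [h]; exact Cardinal.mk_range_le.trans_lt hι
  have h2 := notMem_of_lt_csInf' h1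
  by_contra h3
  refine h2 ⟨Set.range f, rfl, ?_, ?_, ?_⟩
  · rintro _ ⟨i, rfl⟩; exact hf i
  · rintro _ ⟨i, rfl⟩ _ ⟨j, rfl⟩ _; exact hc i j
  · rintro ⟨B, hB, hB'⟩
    exact h3 ⟨B, hB, fun i => hB' _ ⟨i, rfl⟩⟩

def Good (q : Set ℕ × Set ℕ) : Prop :=
  Thick q.1 ∧ q.2.Infinite ∧ ∀ x ∈ q.2, ∀ y ∈ q.2, x < y →
    ∃ n, x ≤ n ∧ n ≤ y ∧ Set.Icc n (n + x) ⊆ q.1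

def RR (q q' : Set ℕ × Set ℕ) : Prop := almostSub q.1 q'.1 ∧ almostSub q.2 q'.2

lemma thick_ge {A : Set ℕ} (hA : Thick A) (k N : ℕ) : ∃ n, N ≤ n ∧ Set.Icc n (n + k) ⊆ A := by
  obtain ⟨n, hn⟩ := thick_diff hA (Set.finite_Iio N) k
  refine ⟨n, ?_, fun m hm => (hn hm).1⟩
  have := (hn (show n ∈ Set.Icc n (n + k) from ⟨le_rfl, by omega⟩)).2
  simpa using this

lemma exists_sparse {A X : Set ℕ} (hA : Thick A) (hX : X.Infinite) :
    ∃ X' ⊆ X, Good (A, X') := by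
  choose N hN1 hN2 using fun x => thick_ge hA x x
  choose s hs1 hs2 using fun x => hX.exists_gt (max x (N x))
  let u : ℕ → ℕ := fun i => s^[i + 1] 0
  have hu : ∀ i, u (i + 1) = s (u i) := fun i => Function.iterate_succ_apply' s (i + 1) 0
  have hmono : StrictMono u := strictMono_nat_of_lt_succ fun i => by
    rw [hu]; exact (le_max_left _ _).trans_lt (hs2 (u i))
  refine ⟨Set.range u, ?_, hA, Set.infinite_range_of_injective hmono.injective, ?_⟩
  · rintro _ ⟨i, rfl⟩
    simp only [u, Function.iterate_succ_apply']
    exact hs1 _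
  · rintro _ ⟨i, rfl⟩ _ ⟨j, rfl⟩ hij
    refine ⟨N (u i), hN1 _, ?_, hN2 _⟩
    have h1 : i + 1 ≤ j := hmono.lt_iff_lt.1 hij
    have h2 := hmono.monotone h1
    rw [hu] at h2
    exact ((le_max_right _ _).trans (hs2 (u i)).le).trans h2

lemma Q_lb (h : towerNum = Cardinal.continuum) {ι : Type} (hι : Cardinal.mk ι < Cardinal.continuum)
    (f : ι → Set ℕ × Set ℕ) (hf : ∀ i, Good (f i))
    (hc : ∀ i j, RR (f i) (f j) ∨ RR (f j) (f i)) :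
    ∃ A X : Set ℕ, Thick A ∧ X.Infinite ∧ ∀ i, almostSub A (f i).1 ∧ almostSub X (f i).2 := by
  rcases isEmpty_or_nonempty ι with he | ⟨⟨i0⟩⟩
  · exact ⟨Set.univ, Set.univ, fun k => ⟨0, Set.subset_univ _⟩, Set.infinite_univ,
      fun i => he.elim i⟩
  obtain ⟨X, hX, hXf⟩ := tower_lb h hι (fun i => (f i).2) (fun i => (hf i).2.1)
    (fun i j => (hc i j).imp And.right And.right)
  choose nx hnx1 hnx2 using fun x => hX.exists_gt x
  let P : Set ℕ := {z | z.unpair.1 ∈ X ∧ z.unpair.1 ≤ z.unpair.2 ∧ z.unpair.2 ≤ nx z.unpair.1}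
  let T : ι → Set ℕ := fun i =>
    {z | z ∈ P ∧ Set.Icc z.unpair.2 (z.unpair.2 + z.unpair.1) ⊆ (f i).1}
  have hT : ∀ i, (T i).Infinite := by
    intro i
    obtain ⟨N, hN⟩ := (hXf i).bddAbove
    have key : ∀ x ∈ X, N < x → x ∈ (f i).2 := by
      intro x hx hNx
      by_contra hxf
      have := hN ⟨hx, hxf⟩
      omega
    refine Set.Infinite.of_image (fun z => z.unpair.1) ((hX.sdiff (Set.finite_Iic N)).mono ?_)
    rintro x ⟨hx, hxN⟩
    have hxN : N < x := by simpa using hxN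
    obtain ⟨n, h1, h2, h3⟩ := (hf i).2.2 x (key x hx hxN) (nx x)
      (key _ (hnx1 x) (hxN.trans (hnx2 x))) (hnx2 x)
    refine ⟨Nat.pair x n, ?_, by simp⟩
    simp only [T, P, Set.mem_ofPred_eq, Nat.unpair_pair]
    exact ⟨⟨hx, h1, h2⟩, h3⟩
  have hTc : ∀ i j, almostSub (f i).1 (f j).1 → almostSub (T i) (T j) := by
    intro i j hij
    obtain ⟨N, hN⟩ := hij.bddAbove
    refine (((Set.finite_Iic N).prod (Set.finite_Iic N)).image (fun q => Nat.pair q.1 q.2)).subset ?_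
    rintro z ⟨⟨hzP, hzi⟩, hzj⟩
    have h1 : ¬ Set.Icc z.unpair.2 (z.unpair.2 + z.unpair.1) ⊆ (f j).1 := fun hh => hzj ⟨hzP, hh⟩
    obtain ⟨m, hm, hmj⟩ := Set.not_subset.1 h1
    have h2 : m ≤ N := hN ⟨hzi hm, hmj⟩
    have h3 := hm.1
    have h4 := hzP.2.1
    refine ⟨(z.unpair.1, z.unpair.2), ⟨?_, ?_⟩, by simp⟩ <;> simp only [Set.mem_Iic] <;> omega
  obtain ⟨B, hB, hBT⟩ := tower_lb h hι T hT
    (fun i j => (hc i j).imp (fun hh => hTc i j hh.1) (fun hh => hTc j i hh.1))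
  have hB' : (B ∩ P).Infinite := by
    intro hfin
    refine hB ((hfin.union (hBT i0)).subset ?_)
    intro z hz
    by_cases hzP : z ∈ P
    · exact Or.inl ⟨hz, hzP⟩
    · exact Or.inr ⟨hz, fun hh => hzP hh.1⟩
  refine ⟨{m | ∃ z ∈ B ∩ P, m ∈ Set.Icc z.unpair.2 (z.unpair.2 + z.unpair.1)}, X, ?_, hX,
    fun i => ⟨?_, hXf i⟩⟩
  · intro k
    have : ∃ z ∈ B ∩ P, k ≤ z.unpair.1 := by
      by_contra! hcon
      refine hB' (((Set.finite_Iio k).biUnion fun x _ =>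
        (Set.finite_Iic (nx x)).image (Nat.pair x)).subset ?_)
      intro z hz
      refine Set.mem_biUnion (x := z.unpair.1) (hcon z hz) ⟨z.unpair.2, hz.2.2.2, by simp⟩
    obtain ⟨z, hz, hk⟩ := this
    exact ⟨z.unpair.2, fun m hm => ⟨z, hz, hm.1, hm.2.trans (by omega)⟩⟩
  · refine (((hBT i).subset (show (B ∩ P) \ T i ⊆ B \ T i from fun z hz => ⟨hz.1.1, hz.2⟩)).biUnion
      fun z _ => Set.finite_Icc z.unpair.2 (z.unpair.2 + z.unpair.1)).subset ?_
    rintro m ⟨⟨z, hz, hm⟩, hmi⟩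
    exact Set.mem_biUnion (x := z) ⟨hz, fun hh => hmi (hh.2 hm)⟩ hm

lemma gen_rec {W Q : Type} [LinearOrder W] [WellFoundedLT W] [Nonempty Q]
    (P : (α : W) → ((β : W) → β < α → Q) → Q → Prop) :
    ∃ f : W → Q, ∀ α, (∃ q, P α (fun β _ => f β) q) → P α (fun β _ => f β) (f α) := by
  let F : (α : W) → ((β : W) → β < α → Q) → Q := fun α g => Classical.epsilon (P α g)
  refine ⟨(wellFounded_lt (α := W)).fix F, fun α hα => ?_⟩
  have := Classical.epsilon_spec hα
  rw [WellFounded.fix_eq]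
  exact this

lemma exists_tower (h : towerNum = Cardinal.continuum) :
    ∃ (W : Type) (_ : LinearOrder W) (A : W → Set ℕ), Nonempty W ∧
      (∀ g : ℕ → W, ∃ b, ∀ n, g n ≤ b) ∧ (∀ α, Thick (A α)) ∧
      (∀ α β, β ≤ α → almostSub (A α) (A β)) ∧
      ∀ X : Set ℕ, ∃ α, A α ⊆ X ∨ ¬ Thick (A α ∩ X) := by
  let W : Type := (Cardinal.continuum.{0}).ord.ToType
  have hW : Cardinal.mk W = Cardinal.continuum := Cardinal.mk_ord_toType _
  have hseg : ∀ α : W, Cardinal.mk (Set.Iio α) < Cardinal.continuum := by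
    intro α
    exact (Cardinal.mk_Iio_lt α (by simp [W])).trans_eq hW
  have hcof : Cardinal.aleph0 < Order.cof W := by
    rw [Ordinal.cof_toType, ← Cardinal.two_power_aleph0]
    exact Cardinal.lt_cof_ord_power le_rfl Cardinal.one_lt_two
  obtain ⟨e⟩ : Nonempty (W ≃ Set ℕ) := by
    rw [← Cardinal.eq, hW]; simp
  let D : W → Set ℕ × Set ℕ → Prop := fun α q => q.1 ⊆ e α ∨ ¬ Thick (q.1 ∩ e α)
  obtain ⟨f, hf⟩ := gen_rec (W := W) (Q := Set ℕ × Set ℕ)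
    (fun α g q => Good q ∧ D α q ∧ ∀ β (hβ : β < α), RR q (g β hβ))
  have main : ∀ α, Good (f α) ∧ D α (f α) ∧ ∀ β, β < α → RR (f α) (f β) := by
    intro α
    induction α using WellFoundedLT.induction with
    | ind α ih =>
    refine hf α ?_
    obtain ⟨A, X, hA, hX, hAX⟩ := Q_lb h (hseg α) (fun i => f i.1) (fun i => (ih i.1 i.2).1) (by
      intro i j
      rcases lt_trichotomy i.1 j.1 with hij | hij | hij
      · exact Or.inr ((ih j.1 j.2).2.2 _ hij)
      · rw [hij]; exact Or.inl ⟨almostSub_of_subset le_rfl, almostSub_of_subset le_rfl⟩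
      · exact Or.inl ((ih i.1 i.2).2.2 _ hij))
    have hA' : ∃ A' ⊆ A, Thick A' ∧ (A' ⊆ e α ∨ ¬ Thick (A' ∩ e α)) := by
      by_cases hth : Thick (A ∩ e α)
      · exact ⟨_, Set.inter_subset_left, hth, Or.inl Set.inter_subset_right⟩
      · exact ⟨A, le_rfl, hA, Or.inr hth⟩
    obtain ⟨A', hA'A, hA't, hA'D⟩ := hA'
    obtain ⟨X', hX'X, hG⟩ := exists_sparse hA't hX
    exact ⟨(A', X'), hG, hA'D, fun β hβ =>
      ⟨almostSub_trans (almostSub_of_subset hA'A) (hAX ⟨β, hβ⟩).1,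
       almostSub_trans (almostSub_of_subset hX'X) (hAX ⟨β, hβ⟩).2⟩⟩
  refine ⟨W, inferInstance, fun α => (f α).1, ⟨e.symm ∅⟩, ?_, fun α => (main α).1.1, ?_, ?_⟩
  · intro g
    by_contra! hcon
    have h1 : IsCofinal (Set.range g) := by
      intro b
      obtain ⟨n, hn⟩ := hcon b
      exact ⟨g n, ⟨n, rfl⟩, hn.le⟩
    have h2 := Order.cof_le h1
    have h3 : Cardinal.mk (Set.range g) ≤ Cardinal.aleph0 :=
      Cardinal.mk_le_aleph0_iff.2 (Set.countable_range g).to_subtype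
    exact absurd (h2.trans h3) (not_le.2 hcof)
  · intro α β hβ
    rcases hβ.eq_or_lt with rfl | hlt
    · exact almostSub_of_subset le_rfl
    · exact ((main α).2.2 β hlt).1
  · intro X
    refine ⟨e.symm X, ?_⟩
    have := (main (e.symm X)).2.1
    simpa [D] using this

lemma exists_I (h : towerNum = Cardinal.continuum) : ∃ I, IsMinRightIdeal I ∧ IsPSetIn I := by
  obtain ⟨W, _, A, hWne, hbd, hth, hdec, hD⟩ := exists_tower h
  let F : Filter ℕ :=
    { sets := {X | ∃ α, almostSub (A α) X}
      univ_sets := ⟨hWne.some, almostSub_of_subset (Set.subset_univ _)⟩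
      sets_of_superset := fun ⟨α, hα⟩ h' => ⟨α, almostSub_trans hα (almostSub_of_subset h')⟩
      inter_sets := by
        rintro x y ⟨α, hα⟩ ⟨β, hβ⟩
        refine ⟨max α β, ?_⟩
        have h1 := almostSub_trans (hdec _ _ (le_max_left α β)) hα
        have h2 := almostSub_trans (hdec _ _ (le_max_right α β)) hβ
        simp only [almostSub, Set.sdiff_inter] at *
        exact h1.union h2 }
  obtain ⟨M, hMc, hMm, hMF⟩ := min_of_filter (F := F) fun X ⟨α, hα⟩ => thick_almost (hth α) hα
  have hmax : ∀ X : Set ℕ, (∀ p ∈ M, X ∈ p) → ∃ α, A α ⊆ X := by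
    intro X hX
    obtain ⟨α, hα | hα⟩ := hD X
    · exact ⟨α, hα⟩
    · refine absurd (thick_of_ideal hMm.1 hMm.2.1 fun p hp => ?_) hα
      exact Filter.inter_mem (hMF p hp _ ⟨α, almostSub_of_subset le_rfl⟩) (hX p hp)
  have hMs : M ⊆ NStar := by
    intro p hp X hX
    exact hMF p hp X ⟨hWne.some, hX.subset fun x hx => hx.2⟩
  refine ⟨M, hMm, hMs, hMc.preimage continuous_subtype_val, ?_⟩
  intro 𝒜 hc hU
  -- each open set contains some `(A α)*`
  have key : ∀ U ∈ 𝒜, ∃ α, ∀ p : ↥NStar, A α ∈ p.1 → p ∈ U := by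
    intro U hUA
    obtain ⟨hUo, hMU⟩ := hU U hUA
    obtain ⟨V, hVo, rfl⟩ := isOpen_induced_iff.1 hUo
    have hMV : M ⊆ V := fun p hp => hMU (a := ⟨p, hMs hp⟩) hp
    have h1 : ∀ p ∈ M, ∃ B : Set ℕ, B ∈ p ∧ ∀ q : βN, B ∈ q → q ∈ V := by
      intro p hp
      obtain ⟨_, ⟨B, rfl⟩, hpB, hBV⟩ :=
        ultrafilterBasis_is_basis.exists_subset_of_mem_open (hMV hp) hVo
      exact ⟨B, hpB, fun q hq => hBV hq⟩
    choose! B hB1 hB2 using h1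
    obtain ⟨t, htM, ht⟩ := hMc.isCompact.elim_nhds_subcover (fun p => {q : βN | B p ∈ q})
      (fun p hp => (ultrafilter_isOpen_basic _).mem_nhds (hB1 p hp))
    obtain ⟨α, hα⟩ := hmax (⋃ p ∈ t, B p) (by
      intro q hq
      obtain ⟨p, hp, hqp⟩ := Set.mem_iUnion₂.1 (ht hq)
      exact Filter.mem_of_superset hqp (Set.subset_biUnion_of_mem (u := fun p => B p) hp))
    refine ⟨α, fun q hq => ?_⟩
    have h2 : (⋃ p ∈ t, B p) ∈ q.1 := Filter.mem_of_superset hq hα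
    obtain ⟨p, hp, hqp⟩ := (Ultrafilter.finite_biUnion_mem_iff t.finite_toSet).1 h2
    exact hB2 p (htM p hp) _ hqp
  choose! a ha using key
  obtain ⟨α, hα⟩ : ∃ α, ∀ U ∈ 𝒜, a U ≤ α := by
    rcases 𝒜.eq_empty_or_nonempty with rfl | hne
    · exact ⟨hWne.some, by simp⟩
    · obtain ⟨g, hg⟩ := hc.exists_eq_range hne
      obtain ⟨b, hb⟩ := hbd (fun n => a (g n))
      refine ⟨b, fun U hU' => ?_⟩
      rw [hg] at hU'
      obtain ⟨n, rfl⟩ := hU'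
      exact hb n
  intro p hp
  rw [mem_interior]
  refine ⟨{q | A α ∈ q.1}, ?_, (ultrafilter_isOpen_basic (A α)).preimage continuous_subtype_val, ?_⟩
  · intro q hq U hU'
    exact ha U hU' q (mem_of_almost q.2 (hdec _ _ (hα U hU')) hq)
  · exact hMF p.1 hp _ ⟨α, almostSub_of_subset le_rfl⟩

/-- If `𝔱 = 𝔠` then there are minimal right ideals `I, J` of
`(βℕ, +)` with `I` a `P`-set in `ℕ*` and `J` not a `P`-set; consequently no
autohomeomorphism of `ℕ*` maps `I` onto `J`. -/
theorem stmt9 (h : towerNum = Cardinal.continuum) :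
    ∃ I J : Set βN, IsMinRightIdeal I ∧ IsMinRightIdeal J ∧
      IsPSetIn I ∧ ¬ IsPSetIn J ∧
      ∀ e : ↥NStar ≃ₜ ↥NStar,
        e '' (Subtype.val ⁻¹' I) ≠ (Subtype.val ⁻¹' J : Set ↥NStar) := by
  obtain ⟨I, hI, hIP⟩ := exists_I h
  obtain ⟨J, hJ, hJs, hJP⟩ := exists_J
  refine ⟨I, J, hI, hJ, hIP, hJP, fun e he => hJP ⟨hJs, ?_⟩⟩
  · rw [← he]; exact pset_homeo e hIP.2

end
end

section
/- Assuming the Continuum Hypothesis (2^{ℵ₀} = ℵ₁), there is an autohomeomorphism τ of ℕ* such that (ℕ*, τ) is chain transitive but (ℕ*, τ) is not isomorphic to (ℕ*, σ). -/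
open Filter Set Topology

noncomputable section

/-! Auxiliary material -/
namespace P19

instance germBA {α β : Type} (l : Filter α) [BooleanAlgebra β] : BooleanAlgebra (Germ l β) :=
  { (inferInstance : DistribLattice (Germ l β)), (inferInstance : BoundedOrder (Germ l β)) with
    compl := Germ.map compl
    inf_compl_le_bot := fun a => Germ.inductionOn a fun f =>
      Germ.coe_le.2 (Eventually.of_forall fun x => by simp)
    top_le_sup_compl := fun a => Germ.inductionOn a fun f =>
      Germ.coe_le.2 (Eventually.of_forall fun x => by simp) }

theorem germ_compl {α β : Type} (l : Filter α) [BooleanAlgebra β] (f : α → β) :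
    ((f : Germ l β))ᶜ = ((fun x => (f x)ᶜ : α → β) : Germ l β) := rfl

theorem germ_inf {α β : Type} (l : Filter α) [BooleanAlgebra β] (f g : α → β) :
    ((f : Germ l β)) ⊓ (g : Germ l β) = ((fun x => f x ⊓ g x : α → β) : Germ l β) := rfl

def Sat (A : Type) [BooleanAlgebra A] : Prop :=
  ∀ (e : ℕ → A) (P Q : ℕ → Prop),
    (∀ n, ∃ y, ∀ i < n, (e i ≤ y ↔ P i) ∧ (e i ≤ yᶜ ↔ Q i)) →
    ∃ y, ∀ i, (e i ≤ y ↔ P i) ∧ (e i ≤ yᶜ ↔ Q i)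

def Atomless (A : Type) [BooleanAlgebra A] : Prop := ∀ a : A, a ≠ ⊥ → ∃ b, b ≠ ⊥ ∧ b < a

section
variable {A B : Type} [BooleanAlgebra A] [BooleanAlgebra B]

theorem avoid (hA : Atomless A) (S : Finset A) : (∀ v ∈ S, v ≠ ⊥) → ∀ w : A, w ≠ ⊥ →
    ∃ t : A, t ≠ ⊥ ∧ t ≤ w ∧ ∀ v ∈ S, ¬ v ≤ t := by
  classical
  induction S using Finset.induction_on with
  | empty => intro _ w hw; exact ⟨w, hw, le_rfl, by simp⟩
  | insert a S ha ih =>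
    intro h w hw
    obtain ⟨t, ht, htw, hS⟩ := ih (fun v hv => h v (Finset.mem_insert_of_mem hv)) w hw
    by_cases hat : a ≤ t
    · obtain ⟨b, hb, hba⟩ := hA a (h a (Finset.mem_insert_self _ _))
      refine ⟨b, hb, hba.le.trans (hat.trans htw), fun v hv => ?_⟩
      rcases Finset.mem_insert.1 hv with rfl | hv
      · exact not_le_of_gt hba
      · exact fun hvb => hS v hv (hvb.trans (hba.le.trans hat))
    · refine ⟨t, ht, htw, fun v hv => ?_⟩
      rcases Finset.mem_insert.1 hv with rfl | hv
      · exact hat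
      · exact hS v hv

/-- key step of the splitting lemma -/
theorem split_step (hA : Atomless A) (S : Finset A) (y w : A) (hw : w ≠ ⊥) (hwy : w ≤ y)
    (h : ∀ v ∈ S, ¬ v ≤ y ∧ ¬ v ≤ yᶜ) :
    ∃ y' : A, (∀ v ∈ S, ¬ v ≤ y' ∧ ¬ v ≤ y'ᶜ) ∧ ¬ w ≤ y' ∧ ¬ w ≤ y'ᶜ := by
  classical
  obtain ⟨t, ht, htw, hS⟩ := avoid hA (insert w (S.image (fun v => v ⊓ y))) (by
    intro v hv
    rcases Finset.mem_insert.1 hv with rfl | hv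
    · exact hw
    · obtain ⟨u, hu, rfl⟩ := Finset.mem_image.1 hv
      intro hb
      exact (h u hu).2 (le_compl_iff_disjoint_right.2 (disjoint_iff.2 hb))) w hw
  refine ⟨y \ t, ⟨fun v hv => ⟨fun hle => (h v hv).1 (hle.trans sdiff_le), fun hle => ?_⟩,
    fun hle => ?_, fun hle => ?_⟩⟩
  · refine hS (v ⊓ y) (Finset.mem_insert_of_mem (Finset.mem_image_of_mem _ hv)) ?_
    rw [le_compl_iff_disjoint_right, disjoint_iff, ← inf_sdiff_assoc, sdiff_eq_bot_iff] at hle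
    exact hle
  · apply ht
    have h1 : t ≤ y \ t := htw.trans hle
    have h2 : Disjoint t (y \ t) := disjoint_sdiff_self_right
    exact h2.eq_bot_of_le h1
  · refine hS w (Finset.mem_insert_self _ _) ?_
    rw [le_compl_iff_disjoint_right, disjoint_iff, ← inf_sdiff_assoc, sdiff_eq_bot_iff,
      inf_eq_left.2 hwy] at hle
    exact hle

theorem split (hA : Atomless A) (S : Finset A) : (∀ v ∈ S, v ≠ ⊥) →
    ∃ y : A, ∀ v ∈ S, ¬ v ≤ y ∧ ¬ v ≤ yᶜ := by
  classical
  induction S using Finset.induction_on with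
  | empty => intro _; exact ⟨⊥, by simp⟩
  | insert a S ha ih =>
    intro h
    have ha0 := h a (Finset.mem_insert_self _ _)
    obtain ⟨y, hy⟩ := ih (fun v hv => h v (Finset.mem_insert_of_mem hv))
    have key : ∃ y' : A, (∀ v ∈ S, ¬ v ≤ y' ∧ ¬ v ≤ y'ᶜ) ∧ ¬ a ≤ y' ∧ ¬ a ≤ y'ᶜ := by
      by_cases h1 : a ≤ y
      · exact split_step hA S y a ha0 h1 hy
      · by_cases h2 : a ≤ yᶜ
        · exact split_step hA S yᶜ a ha0 h2 (fun v hv => by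
            rw [compl_compl]; exact (hy v hv).symm)
        · exact ⟨y, hy, h1, h2⟩
    obtain ⟨y', h1, h2⟩ := key
    refine ⟨y', fun v hv => ?_⟩
    rcases Finset.mem_insert.1 hv with rfl | hv
    · exact h2
    · exact h1 v hv

/-- graphs of partial isomorphisms between subalgebras -/
structure IsG (R : Set (A × B)) : Prop where
  top_mem : ⊤ ∈ R
  sup_mem : ∀ z ∈ R, ∀ w ∈ R, z ⊔ w ∈ R
  compl_mem : ∀ z ∈ R, zᶜ ∈ R
  zero : ∀ z ∈ R, z.1 = ⊥ ↔ z.2 = ⊥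

theorem IsG.bot_mem {R : Set (A × B)} (h : IsG R) : ⊥ ∈ R := by
  have := h.compl_mem _ h.top_mem
  rwa [compl_top] at this

theorem IsG.inf_mem {R : Set (A × B)} (h : IsG R) (z) (hz : z ∈ R) (w) (hw : w ∈ R) :
    z ⊓ w ∈ R := by
  have := h.compl_mem _ (h.sup_mem _ (h.compl_mem z hz) _ (h.compl_mem w hw))
  rwa [compl_sup, compl_compl, compl_compl] at this

theorem IsG.sdiff_mem {R : Set (A × B)} (h : IsG R) (z) (hz : z ∈ R) (w) (hw : w ∈ R) :
    z \ w ∈ R := by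
  rw [_root_.sdiff_eq]; exact h.inf_mem _ hz _ (h.compl_mem _ hw)

theorem IsG.le_iff {R : Set (A × B)} (h : IsG R) (z) (hz : z ∈ R) (w) (hw : w ∈ R) :
    z.1 ≤ w.1 ↔ z.2 ≤ w.2 := by
  rw [← sdiff_eq_bot_iff, ← sdiff_eq_bot_iff]
  exact h.zero _ (h.sdiff_mem z hz w hw)

theorem IsG.swap {R : Set (A × B)} (h : IsG R) : IsG (Prod.swap ⁻¹' R : Set (B × A)) where
  top_mem := h.top_mem
  sup_mem _ hz _ hw := h.sup_mem _ hz _ hw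
  compl_mem _ hz := h.compl_mem _ hz
  zero _ hz := (h.zero _ hz).symm

theorem IsG.finsup_mem {R : Set (A × B)} (h : IsG R) (F : Finset (A × B))
    (hF : ∀ c ∈ F, c ∈ R) : F.sup id ∈ R :=
  Finset.sup_induction h.bot_mem h.sup_mem hF

theorem fin_step (hB : Atomless B) {R : Set (A × B)} (h : IsG R) (x : A) (F : Finset (A × B))
    (hF : ∀ c ∈ F, c ∈ R) :
    ∃ y : B, ∀ c ∈ F, (c.2 ≤ y ↔ c.1 ≤ x) ∧ (c.2 ≤ yᶜ ↔ c.1 ≤ xᶜ) := by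
  classical
  set P := (F.filter (fun c => c.1 ≤ x)).sup id with hP
  set N := (F.filter (fun c => c.1 ≤ xᶜ)).sup id with hN
  have hPR : P ∈ R := h.finsup_mem _ (fun c hc => hF c (Finset.mem_filter.1 hc).1)
  have hNR : N ∈ R := h.finsup_mem _ (fun c hc => hF c (Finset.mem_filter.1 hc).1)
  have hPx : P.1 ≤ x := by
    refine Finset.sup_induction (p := fun z : A × B => z.1 ≤ x) bot_le ?_ ?_
    · intro a ha b hb; exact sup_le ha hb
    · intro c hc; exact (Finset.mem_filter.1 hc).2
  have hNx : N.1 ≤ xᶜ := by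
    refine Finset.sup_induction (p := fun z : A × B => z.1 ≤ xᶜ) bot_le ?_ ?_
    · intro a ha b hb; exact sup_le ha hb
    · intro c hc; exact (Finset.mem_filter.1 hc).2
  have hPc : ∀ c ∈ F, c.1 ≤ x → c.2 ≤ P.2 := fun c hc hx =>
    (Finset.le_sup (f := id) (Finset.mem_filter.2 ⟨hc, hx⟩) : c ≤ P).2
  have hNc : ∀ c ∈ F, c.1 ≤ xᶜ → c.2 ≤ N.2 := fun c hc hx =>
    (Finset.le_sup (f := id) (Finset.mem_filter.2 ⟨hc, hx⟩) : c ≤ N).2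
  have hPN : P.2 ≤ N.2ᶜ := by
    refine (h.le_iff P hPR Nᶜ (h.compl_mem _ hNR)).1 ?_
    exact hPx.trans (le_compl_comm.1 hNx)
  obtain ⟨y0, hy0⟩ := split hB
    (((F.filter (fun c => ¬ c.1 ≤ x)).image (fun c => c.2 \ P.2)) ∪
      ((F.filter (fun c => ¬ c.1 ≤ xᶜ)).image (fun c => c.2 \ N.2))) (by
    intro v hv
    rcases Finset.mem_union.1 hv with hv | hv
    · obtain ⟨c, hc, rfl⟩ := Finset.mem_image.1 hv
      obtain ⟨hc, hcx⟩ := Finset.mem_filter.1 hc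
      intro hb
      rw [_root_.sdiff_eq_bot_iff, ← h.le_iff c (hF c hc) P hPR] at hb
      exact hcx (hb.trans hPx)
    · obtain ⟨c, hc, rfl⟩ := Finset.mem_image.1 hv
      obtain ⟨hc, hcx⟩ := Finset.mem_filter.1 hc
      intro hb
      rw [_root_.sdiff_eq_bot_iff, ← h.le_iff c (hF c hc) N hNR] at hb
      exact hcx (hb.trans hNx))
  refine ⟨(y0 ⊔ P.2) \ N.2, fun c hc => ⟨⟨fun hle => ?_, fun hx => ?_⟩,
    ⟨fun hle => ?_, fun hx => ?_⟩⟩⟩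
  · by_contra hx
    refine (hy0 (c.2 \ P.2) (Finset.mem_union_left _ (Finset.mem_image_of_mem _
      (Finset.mem_filter.2 ⟨hc, hx⟩)))).1 ?_
    rw [sdiff_le_iff, sup_comm]
    exact hle.trans sdiff_le
  · rw [_root_.sdiff_eq]
    exact (hPc c hc hx).trans (le_inf le_sup_right hPN)
  · by_contra hx
    refine (hy0 (c.2 \ N.2) (Finset.mem_union_right _ (Finset.mem_image_of_mem _
      (Finset.mem_filter.2 ⟨hc, hx⟩)))).2 ?_
    rw [sdiff_le_iff]
    refine hle.trans ?_
    rw [_root_.sdiff_eq, compl_inf, compl_compl, compl_sup, sup_comm]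
    exact sup_le_sup_left inf_le_left _
  · refine (hNc c hc hx).trans ?_
    rw [_root_.sdiff_eq, compl_inf, compl_compl]
    exact le_sup_right

theorem ba_compl {C : Type} [BooleanAlgebra C] (r s w : C) :
    ((r ⊓ w) ⊔ (s ⊓ wᶜ))ᶜ = (rᶜ ⊓ w) ⊔ (sᶜ ⊓ wᶜ) := by
  set z := ((r ⊓ w) ⊔ (s ⊓ wᶜ))ᶜ with hz
  have h1 : z ⊓ w = rᶜ ⊓ w := by
    have h3 : (sᶜ ⊔ w) ⊓ w = w := inf_eq_right.2 le_sup_right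
    rw [hz, compl_sup, compl_inf, compl_inf, compl_compl, inf_assoc, h3, inf_sup_right,
      compl_inf_self, sup_bot_eq]
  have h2 : z ⊓ wᶜ = sᶜ ⊓ wᶜ := by
    have h3 : (rᶜ ⊔ wᶜ) ⊓ wᶜ = wᶜ := inf_eq_right.2 le_sup_right
    rw [hz, compl_sup, compl_inf, compl_inf, compl_compl, inf_right_comm, h3, inf_sup_left,
      compl_inf_self, sup_bot_eq, inf_comm]
  rw [← h1, ← h2, ← inf_sup_left, sup_compl_eq_top, inf_top_eq]

theorem ext_step (hB : Atomless B) (hS : Sat B) {R : Set (A × B)} (h : IsG R) (hc : R.Countable)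
    (x : A) : ∃ R' : Set (A × B), IsG R' ∧ R'.Countable ∧ R ⊆ R' ∧ ∃ y, (x, y) ∈ R' := by
  obtain ⟨e, rfl⟩ := hc.exists_eq_range ⟨_, h.top_mem⟩
  classical
  obtain ⟨y, hy⟩ := hS (fun i => (e i).2) (fun i => (e i).1 ≤ x) (fun i => (e i).1 ≤ xᶜ) (by
    intro n
    obtain ⟨y, hy⟩ := fin_step hB h x ((Finset.range n).image e) (by
      intro c hc
      obtain ⟨i, _, rfl⟩ := Finset.mem_image.1 hc
      exact ⟨i, rfl⟩)
    exact ⟨y, fun i hi => hy _ (Finset.mem_image_of_mem _ (Finset.mem_range.2 hi))⟩)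
  set w : A × B := (x, y) with hw
  refine ⟨range (fun p : ℕ × ℕ => (e p.1 ⊓ w) ⊔ (e p.2 ⊓ wᶜ)), ⟨?_, ?_, ?_, ?_⟩,
    countable_range _, ?_, y, ?_⟩
  · obtain ⟨i, hi⟩ := h.top_mem
    exact ⟨(i, i), by simp [hi]⟩
  · rintro _ ⟨⟨i, j⟩, rfl⟩ _ ⟨⟨i', j'⟩, rfl⟩
    obtain ⟨k, hk⟩ := h.sup_mem _ ⟨i, rfl⟩ _ ⟨i', rfl⟩
    obtain ⟨l, hl⟩ := h.sup_mem _ ⟨j, rfl⟩ _ ⟨j', rfl⟩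
    refine ⟨(k, l), ?_⟩
    simp only [hk, hl, inf_sup_right]
    exact sup_sup_sup_comm _ _ _ _
  · rintro _ ⟨⟨i, j⟩, rfl⟩
    obtain ⟨k, hk⟩ := h.compl_mem _ ⟨i, rfl⟩
    obtain ⟨l, hl⟩ := h.compl_mem _ ⟨j, rfl⟩
    refine ⟨(k, l), ?_⟩
    simp only [hk, hl]
    exact (ba_compl _ _ _).symm
  · rintro _ ⟨⟨i, j⟩, rfl⟩
    have hi := (hy i).2
    have hj := (hy j).1
    change ((e i).1 ⊓ x) ⊔ ((e j).1 ⊓ xᶜ) = ⊥ ↔ ((e i).2 ⊓ y) ⊔ ((e j).2 ⊓ yᶜ) = ⊥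
    rw [sup_eq_bot_iff, sup_eq_bot_iff, ← disjoint_iff, ← disjoint_iff, ← disjoint_iff,
      ← disjoint_iff, ← le_compl_iff_disjoint_right, ← le_compl_iff_disjoint_right,
      ← le_compl_iff_disjoint_right, ← le_compl_iff_disjoint_right, compl_compl, compl_compl]
    exact and_congr hi.symm hj.symm
  · rintro _ ⟨i, rfl⟩
    refine ⟨(i, i), ?_⟩
    simp only
    rw [← inf_sup_left, sup_compl_eq_top, inf_top_eq]
  · obtain ⟨i, hi⟩ := h.top_mem
    obtain ⟨j, hj⟩ := h.bot_mem
    exact ⟨(i, j), by simp [hi, hj, ← hw]⟩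

theorem IsG.sUnion {𝓕 : Set (Set (A × B))} (hne : 𝓕.Nonempty) (hG : ∀ S ∈ 𝓕, IsG S)
    (hch : ∀ S ∈ 𝓕, ∀ T ∈ 𝓕, S ⊆ T ∨ T ⊆ S) : IsG (⋃₀ 𝓕) where
  top_mem := by
    obtain ⟨S, hS⟩ := hne
    exact ⟨S, hS, (hG S hS).top_mem⟩
  sup_mem := by
    rintro z ⟨S, hS, hz⟩ w ⟨T, hT, hw⟩
    rcases hch S hS T hT with h | h
    · exact ⟨T, hT, (hG T hT).sup_mem _ (h hz) _ hw⟩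
    · exact ⟨S, hS, (hG S hS).sup_mem _ hz _ (h hw)⟩
  compl_mem := by
    rintro z ⟨S, hS, hz⟩
    exact ⟨S, hS, (hG S hS).compl_mem _ hz⟩
  zero := by
    rintro z ⟨S, hS, hz⟩
    exact (hG S hS).zero _ hz

theorem IsG.base [Nontrivial A] [Nontrivial B] : IsG ({⊥, ⊤} : Set (A × B)) where
  top_mem := by simp
  sup_mem := by rintro z (rfl | rfl) w (rfl | rfl) <;> simp
  compl_mem := by rintro z (rfl | rfl) <;> simp
  zero := by rintro z (rfl | rfl) <;> simp

theorem exists_total [Nontrivial A] [Nontrivial B] (hA : Atomless A) (hB : Atomless B)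
    (sA : Sat A) (sB : Sat B) (cA : Cardinal.mk A ≤ Cardinal.aleph 1)
    (cB : Cardinal.mk B ≤ Cardinal.aleph 1) :
    ∃ R : Set (A × B), IsG R ∧ (∀ a, ∃ b, (a, b) ∈ R) ∧ (∀ b, ∃ a, (a, b) ∈ R) := by
  classical
  obtain ⟨r, wo, hr⟩ := Cardinal.exists_ord_eq (A ⊕ B)
  have hI : Cardinal.mk (A ⊕ B) ≤ Cardinal.aleph 1 := by
    rw [Cardinal.mk_sum, Cardinal.lift_id, Cardinal.lift_id]
    exact Cardinal.add_le_of_le (Cardinal.aleph0_le_aleph 1) cA cB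
  have hcount : ∀ i, {j | r j i}.Countable := by
    intro i
    have h1 := Cardinal.card_typein_lt i hr
    have h2 : (Ordinal.typein r i).card = Cardinal.mk {j | r j i} := rfl
    rw [h2] at h1
    have h3 := h1.trans_le hI
    rw [← Cardinal.succ_aleph0, Order.lt_succ_iff] at h3
    exact Cardinal.le_aleph0_iff_set_countable.1 h3
  let D : A ⊕ B → Set (A × B) → Prop := fun i R =>
    Sum.elim (fun a => ∃ b, (a, b) ∈ R) (fun b => ∃ a, (a, b) ∈ R) i
  have hg : ∀ (S : Set (A × B)) (i : A ⊕ B), ∃ T : Set (A × B), S ⊆ T ∧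
      (IsG S → S.Countable → IsG T ∧ T.Countable ∧ D i T) := by
    intro S i
    by_cases hS : IsG S ∧ S.Countable
    · obtain ⟨hS, hc⟩ := hS
      rcases i with a | b
      · obtain ⟨R, h1, h2, h3, h4⟩ := ext_step hB sB hS hc a
        exact ⟨R, h3, fun _ _ => ⟨h1, h2, h4⟩⟩
      · obtain ⟨R, h1, h2, h3, h4⟩ := ext_step hA sA hS.swap
          (hc.preimage Prod.swap_injective) b
        refine ⟨Prod.swap ⁻¹' R, fun z hz => h3 ?_, fun _ _ =>
          ⟨h1.swap, h2.preimage Prod.swap_injective, h4⟩⟩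
        simpa using hz
    · exact ⟨S, subset_rfl, fun h1 h2 => (hS ⟨h1, h2⟩).elim⟩
  choose g hg1 hg2 using hg
  have wf : WellFounded r := wo.wf
  let f : A ⊕ B → Set (A × B) := wf.fix (fun i rec =>
    g (⋃₀ (insert {⊥, ⊤} {S | ∃ j, ∃ h : r j i, S = rec j h})) i)
  have hf : ∀ i, f i = g (⋃₀ (insert {⊥, ⊤} {S | ∃ j, ∃ h : r j i, S = f j})) i := by
    intro i
    exact wf.fix_eq _ i
  have mono : ∀ i j, r j i → f j ⊆ f i := by
    intro i j hji
    rw [hf i]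
    refine Subset.trans ?_ (hg1 _ _)
    exact subset_sUnion_of_mem (mem_insert_of_mem _ ⟨j, hji, rfl⟩)
  have tri : ∀ i j, f i ⊆ f j ∨ f j ⊆ f i := by
    intro i j
    rcases trichotomous_of r i j with h | h | h
    · exact Or.inl (mono _ _ h)
    · subst h; exact Or.inl subset_rfl
    · exact Or.inr (mono _ _ h)
  have bsub : ∀ S : Set (A × B), IsG S → ({⊥, ⊤} : Set (A × B)) ⊆ S := by
    rintro S hS z (rfl | rfl)
    · exact hS.bot_mem
    · exact hS.top_mem
  have gen : ∀ J : Set (A ⊕ B), (∀ j ∈ J, IsG (f j)) →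
      IsG (⋃₀ (insert {⊥, ⊤} {S | ∃ j, ∃ _ : j ∈ J, S = f j})) := by
    intro J hJ
    refine IsG.sUnion ⟨_, mem_insert _ _⟩ ?_ ?_
    · rintro S (rfl | ⟨j, hj, rfl⟩)
      · exact IsG.base
      · exact hJ j hj
    · rintro S (rfl | ⟨j, hj, rfl⟩) T (rfl | ⟨k, hk, rfl⟩)
      · exact Or.inl subset_rfl
      · exact Or.inl (bsub _ (hJ k hk))
      · exact Or.inr (bsub _ (hJ j hj))
      · exact tri _ _
  have main : ∀ i, IsG (f i) ∧ (f i).Countable ∧ D i (f i) := by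
    intro i
    induction i using wf.induction with
    | _ i ih =>
      rw [hf i]
      refine hg2 _ _ (gen {j | r j i} (fun j hj => (ih j hj).1)) ?_
      refine Countable.sUnion ?_ ?_
      · refine Countable.insert _ ?_
        refine ((hcount i).image f).mono ?_
        rintro S ⟨j, hj, rfl⟩
        exact ⟨j, hj, rfl⟩
      · rintro S (rfl | ⟨j, hj, rfl⟩)
        · exact (Set.toFinite _).countable
        · exact (ih j hj).2.1
  have sub : ∀ i, f i ⊆ ⋃₀ (insert {⊥, ⊤} {S | ∃ j, ∃ _ : j ∈ (univ : Set (A ⊕ B)), S = f j}) :=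
    fun i => subset_sUnion_of_mem (mem_insert_of_mem _ ⟨i, trivial, rfl⟩)
  refine ⟨_, gen univ (fun j _ => (main j).1), fun a => ?_, fun b => ?_⟩
  · obtain ⟨b, hb⟩ : ∃ b, (a, b) ∈ f (Sum.inl a) := (main (Sum.inl a)).2.2
    exact ⟨b, sub _ hb⟩
  · obtain ⟨a, hb⟩ : ∃ a, (a, b) ∈ f (Sum.inr b) := (main (Sum.inr b)).2.2
    exact ⟨a, sub _ hb⟩

theorem exists_iso [Nontrivial A] [Nontrivial B] (hA : Atomless A) (hB : Atomless B)
    (sA : Sat A) (sB : Sat B) (cA : Cardinal.mk A ≤ Cardinal.aleph 1)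
    (cB : Cardinal.mk B ≤ Cardinal.aleph 1) : Nonempty (A ≃o B) := by
  obtain ⟨R, hR, h1, h2⟩ := exists_total hA hB sA sB cA cB
  choose F hF using h1
  choose G hG using h2
  exact ⟨{ toFun := F
           invFun := G
           left_inv := fun a => le_antisymm ((hR.le_iff _ (hG (F a)) _ (hF a)).2 le_rfl)
             ((hR.le_iff _ (hF a) _ (hG (F a))).2 le_rfl)
           right_inv := fun b => le_antisymm ((hR.le_iff _ (hF (G b)) _ (hG b)).1 le_rfl)
             ((hR.le_iff _ (hG b) _ (hF (G b))).1 le_rfl)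
           map_rel_iff' := fun {a b} => (hR.le_iff _ (hF a) _ (hF b)).symm }⟩

end

/-- diagonalization property of a filter -/
def Diag (l : Filter ℕ) (V : Type) : Prop :=
  ∀ (T : ℕ → Bool → ℕ → V → Prop) (W : ℕ → Bool → Prop) (Y : ℕ → ℕ → V),
    (∀ n, ∀ i < n, ∀ b, (∀ᶠ k in l, T i b k (Y n k)) ↔ W i b) →
    ∃ y : ℕ → V, ∀ i b, (∀ᶠ k in l, T i b k (y k)) ↔ W i b

theorem sat_of_diag {l : Filter ℕ} {V : Type} [BooleanAlgebra V] (h : Diag l V) :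
    Sat (Germ l V) := by
  intro e P Q hfin
  have he : ∀ i, ∃ f : ℕ → V, (f : Germ l V) = e i := fun i =>
    Germ.inductionOn (e i) fun f => ⟨f, rfl⟩
  choose E hE using he
  have hY : ∀ n, ∃ f : ℕ → V, ∀ i < n, (e i ≤ (f : Germ l V) ↔ P i) ∧
      (e i ≤ (f : Germ l V)ᶜ ↔ Q i) := by
    intro n
    obtain ⟨y, hy⟩ := hfin n
    revert hy
    exact Germ.inductionOn y fun f hy => ⟨f, hy⟩
  choose Y hY using hY
  obtain ⟨y, hy⟩ := h (fun i b k v => cond b (E i k ≤ v) (E i k ≤ vᶜ))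
    (fun i b => cond b (P i) (Q i)) Y (by
      intro n i hi b
      have := hY n i hi
      rw [← hE i] at this
      cases b
      · exact this.2
      · exact this.1)
  refine ⟨(y : Germ l V), fun i => ?_⟩
  rw [← hE i]
  exact ⟨hy i true, hy i false⟩

theorem diag_ultra (U : Ultrafilter ℕ) (hU : (U : Filter ℕ) ≤ atTop) (V : Type) :
    Diag (U : Filter ℕ) V := by
  classical
  intro T W Y h
  have hG : ∀ n, ∀ᶠ k in (U : Filter ℕ), ∀ i < n, ∀ b, (T i b k (Y n k) ↔ W i b) := by
    intro n
    refine (Filter.eventually_all_finite (Set.finite_Iio n)).2 fun i hi => ?_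
    refine Filter.eventually_all.2 fun b => ?_
    by_cases hW : W i b
    · exact ((h n i hi b).2 hW).mono fun k hk => ⟨fun _ => hW, fun _ => hk⟩
    · have h1 := mt (h n i hi b).1 hW
      rw [← Ultrafilter.eventually_not] at h1
      exact h1.mono fun k hk => ⟨fun h => (hk h).elim, fun h => (hW h).elim⟩
  let m : ℕ → ℕ := fun k =>
    Nat.findGreatest (fun n => ∀ i < n, ∀ b, (T i b k (Y n k) ↔ W i b)) k
  refine ⟨fun k => Y (m k) k, fun i b => ?_⟩
  have key : ∀ᶠ k in (U : Filter ℕ), (T i b k (Y (m k) k) ↔ W i b) := by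
    filter_upwards [hG (i + 1), hU (eventually_ge_atTop (i + 1))] with k hk hk2
    have h1 : i + 1 ≤ m k := Nat.le_findGreatest hk2 hk
    have h2 : ∀ i < m k, ∀ b, (T i b k (Y (m k) k) ↔ W i b) :=
      Nat.findGreatest_spec (P := fun n => ∀ i < n, ∀ b, (T i b k (Y n k) ↔ W i b)) hk2 hk
    exact h2 i h1 b
  constructor
  · intro h1
    obtain ⟨k, hk1, hk2⟩ := (h1.and key).exists
    exact hk2.1 hk1
  · intro hW
    exact key.mono fun k hk => hk.2 hW

theorem diag_atTop (V : Type) : Diag (atTop : Filter ℕ) V := by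
  classical
  intro T W Y h
  have step : ∀ n k : ℕ, ∃ k', k < k' ∧
      (∀ i < n, ∀ b, ¬ W i b → ∃ l, k ≤ l ∧ l < k' ∧ ¬ T i b l (Y n l)) ∧
      (∀ i < n + 1, ∀ b, W i b → ∀ l ≥ k', T i b l (Y (n + 1) l)) := by
    intro n k
    have h1 : ∀ᶠ k' in (atTop : Filter ℕ),
        ∀ i < n, ∀ b, ¬ W i b → ∃ l, k ≤ l ∧ l < k' ∧ ¬ T i b l (Y n l) := by
      refine (Filter.eventually_all_finite (Set.finite_Iio n)).2 fun i hi => ?_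
      refine Filter.eventually_all.2 fun b => ?_
      by_cases hW : W i b
      · exact Eventually.of_forall fun k' h => (h hW).elim
      · have h1 := mt (h n i hi b).1 hW
        rw [Filter.not_eventually, Filter.frequently_atTop] at h1
        obtain ⟨l, hl, hl2⟩ := h1 k
        filter_upwards [eventually_gt_atTop l] with k' hk' _
        exact ⟨l, hl, hk', hl2⟩
    have h2 : ∀ᶠ k' in (atTop : Filter ℕ),
        ∀ i < n + 1, ∀ b, W i b → ∀ l ≥ k', T i b l (Y (n + 1) l) := by
      refine (Filter.eventually_all_finite (Set.finite_Iio (n + 1))).2 fun i hi => ?_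
      refine Filter.eventually_all.2 fun b => ?_
      by_cases hW : W i b
      · have h1 := (h (n + 1) i hi b).2 hW
        exact (Filter.eventually_forall_ge_atTop.2 h1).mono fun k' hk' _ => hk'
      · exact Eventually.of_forall fun k' h => (hW h).elim
    exact ((eventually_gt_atTop k).and (h1.and h2)).exists
  choose f hf1 hf2 hf3 using step
  let K : ℕ → ℕ := fun n => Nat.rec (motive := fun _ => ℕ) 0 (fun n k => f n k) n
  have K0 : K 0 = 0 := rfl
  have KS : ∀ n, K (n + 1) = f n (K n) := fun n => rfl
  have Kmono : StrictMono K := strictMono_nat_of_lt_succ fun n => by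
    rw [KS]; exact hf1 _ _
  let m : ℕ → ℕ := fun l => @Nat.findGreatest (fun n => K n ≤ l) (fun _ => Classical.dec _) l
  have hm1 : ∀ l, K (m l) ≤ l := fun l =>
    @Nat.findGreatest_spec 0 (fun n => K n ≤ l) (fun _ => Classical.dec _) l (Nat.zero_le l)
      (by rw [K0]; exact Nat.zero_le l)
  have hm2 : ∀ l n, K n ≤ l → n ≤ m l := fun l n h =>
    @Nat.le_findGreatest n (fun n => K n ≤ l) (fun _ => Classical.dec _) l ((Kmono.id_le n).trans h) h
  refine ⟨fun l => Y (m l) l, fun i b => ⟨fun hev => ?_, fun hW => ?_⟩⟩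
  · by_contra hW
    obtain ⟨N, hN⟩ := Filter.eventually_atTop.1 hev
    obtain ⟨l, hl1, hl2, hl3⟩ := hf2 (max N (i + 1)) (K (max N (i + 1))) i
      (lt_of_lt_of_le (Nat.lt_succ_self i) (le_max_right _ _)) b hW
    rw [← KS] at hl2
    have e1 : m l = max N (i + 1) := by
      refine le_antisymm ?_ (hm2 _ _ hl1)
      by_contra hlt
      have := Kmono.monotone (Nat.succ_le_of_lt (not_le.1 hlt))
      have h3 := hm1 l
      simp only [Nat.succ_eq_add_one] at this
      omega
    have h4 := hN l ((le_max_left _ _).trans ((Kmono.id_le _).trans hl1))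
    simp only [e1] at h4
    exact hl3 h4
  · filter_upwards [eventually_ge_atTop (K (i + 1))] with l hl
    have h1 := hm2 l (i + 1) hl
    obtain ⟨n, hn⟩ : ∃ n, m l = n + 1 := ⟨m l - 1, by omega⟩
    have h2 := hm1 l
    rw [hn] at h1 h2 ⊢
    exact hf3 n (K n) i (by omega) b hW l h2

theorem atomless_ultra (U : Ultrafilter ℕ) {V : Type} [BooleanAlgebra V] (hV : Atomless V) :
    Atomless (Germ (U : Filter ℕ) V) := by
  intro a
  refine Germ.inductionOn a fun f hf => ?_
  have hg : ∀ v : V, ∃ b : V, v ≠ ⊥ → b ≠ ⊥ ∧ b < v := by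
    intro v
    by_cases hv : v = ⊥
    · exact ⟨⊥, fun h => (h hv).elim⟩
    · obtain ⟨b, hb⟩ := hV v hv
      exact ⟨b, fun _ => hb⟩
  choose g hg using hg
  have hev : ∀ᶠ k in (U : Filter ℕ), f k ≠ ⊥ := by
    refine Ultrafilter.eventually_not.2 fun h => hf (Germ.coe_eq.2 h)
  refine ⟨((fun k => g (f k) : ℕ → V) : Germ (U : Filter ℕ) V), ?_, lt_of_le_not_ge ?_ ?_⟩
  · intro h
    have h' : ∀ᶠ k in (U : Filter ℕ), g (f k) = ⊥ := Germ.coe_eq.1 h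
    obtain ⟨k, h1, h2⟩ := (h'.and hev).exists
    exact (hg _ h2).1 h1
  · exact Germ.coe_le.2 (hev.mono fun k hk => (hg _ hk).2.le)
  · intro h
    obtain ⟨k, h1, h2⟩ := ((Germ.coe_le.1 h).and hev).exists
    exact not_le_of_gt (hg _ h2).2 h1

/-- `P(ℕ)/fin` -/
abbrev PF : Type := Germ (cofinite : Filter ℕ) Prop

theorem pf_le (f g : ℕ → Prop) : (f : PF) ≤ (g : PF) ↔ ∀ᶠ k in cofinite, f k → g k := Iff.rfl

theorem atomless_PF : Atomless PF := by
  intro a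
  refine Germ.inductionOn a fun f hf => ?_
  have hinf : {k | f k}.Infinite := by
    intro hfin
    apply hf
    refine le_bot_iff.1 ((pf_le f (fun _ => False)).2 ?_)
    filter_upwards [hfin.compl_mem_cofinite] with k hk h
    exact hk h
  let E := hinf.natEmbedding
  refine ⟨((fun k => ∃ n, k = (E (2 * n) : ℕ) : ℕ → Prop) : PF), ?_, lt_of_le_not_ge ?_ ?_⟩
  · intro h
    have h1 := (pf_le _ (fun _ => False)).1 h.le
    have h2 : {k : ℕ | ∃ n, k = (E (2 * n) : ℕ)}.Infinite := by
      refine (Set.infinite_range_of_injective (f := fun n : ℕ => (E (2 * n) : ℕ)) ?_).mono ?_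
      · intro x y hxy
        have := E.injective (Subtype.ext hxy)
        omega
      · rintro _ ⟨n, rfl⟩; exact ⟨n, rfl⟩
    refine h2 ?_
    simpa [Filter.eventually_cofinite] using h1
  · refine (pf_le _ _).2 (Eventually.of_forall ?_)
    rintro _ ⟨n, rfl⟩
    exact (E (2 * n)).2
  · intro h
    have h1 := (pf_le _ _).1 h
    rw [Filter.eventually_cofinite] at h1
    refine ((Set.infinite_range_of_injective (f := fun n : ℕ => (E (2 * n + 1) : ℕ)) ?_).mono ?_) h1
    · intro x y hxy
      have := E.injective (Subtype.ext hxy)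
      omega
    · rintro _ ⟨n, rfl⟩ hh
      obtain ⟨n', hn'⟩ := hh (E (2 * n + 1)).2
      have := E.injective (Subtype.ext hn')
      omega

theorem sat_PF : Sat PF := by
  apply sat_of_diag
  rw [Nat.cofinite_eq_atTop]
  exact diag_atTop _

/-! the shift on the Cantor space -/

abbrev Z2 : Type := ℤ → Bool

def sh (m : ℤ) : Z2 ≃ₜ Z2 where
  toFun x i := x (i + m)
  invFun x i := x (i - m)
  left_inv x := by ext i; simp
  right_inv x := by ext i; simp
  continuous_toFun := by fun_prop
  continuous_invFun := by fun_prop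

abbrev CB : Type := TopologicalSpace.Clopens Z2

def phi : CB ≃o CB where
  toFun a := ⟨sh 1 ⁻¹' a, a.isClopen.preimage (sh 1).continuous⟩
  invFun a := ⟨(sh 1).symm ⁻¹' a, a.isClopen.preimage (sh 1).symm.continuous⟩
  left_inv a := by ext x; simp
  right_inv a := by ext x; simp
  map_rel_iff' {a b} := by
    constructor
    · intro h x hx
      have := @h ((sh 1).symm x) (by simpa using hx)
      simpa using this
    · intro h x hx
      exact h hx

theorem mem_phi (a : CB) (x : Z2) : x ∈ phi a ↔ sh 1 x ∈ a := Iff.rfl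

theorem phi_trans (a : CB) (h : a ≤ phi a) : a = ⊥ ∨ a = ⊤ := by
  by_contra hcon
  push Not at hcon
  have hx : ∃ x, x ∈ a := by
    by_contra hh
    push Not at hh
    exact hcon.1 (TopologicalSpace.Clopens.ext (Set.eq_empty_of_forall_notMem hh))
  have hy : ∃ y, y ∉ a := by
    by_contra hh
    push Not at hh
    exact hcon.2 (TopologicalSpace.Clopens.ext (Set.eq_univ_of_forall hh))
  obtain ⟨x, hx⟩ := hx
  obtain ⟨y, hy⟩ := hy
  have it : ∀ (n : ℕ) (z : Z2), z ∈ a → sh n z ∈ a := by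
    intro n
    induction n with
    | zero => intro z hz; convert hz; ext i; simp [sh]
    | succ n ih =>
      intro z hz
      have h1 := (mem_phi a _).1 (h (ih z hz))
      convert h1 using 1
      ext i
      change z (i + ((n + 1 : ℕ) : ℤ)) = z (i + 1 + (n : ℤ))
      congr 1
      push_cast
      ring
  let z : ℕ → Z2 := fun M i => if i ≤ M then x i else y (i - (2 * M : ℕ))
  have t1 : Tendsto z atTop (𝓝 x) := by
    rw [tendsto_pi_nhds]
    intro i
    refine tendsto_nhds_of_eventually_eq ?_
    filter_upwards [eventually_ge_atTop i.toNat] with M hM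
    have : i ≤ M := by omega
    simp [z, this]
  have t2 : Tendsto (fun M => sh (2 * M : ℕ) (z M)) atTop (𝓝 y) := by
    rw [tendsto_pi_nhds]
    intro i
    refine tendsto_nhds_of_eventually_eq ?_
    filter_upwards [eventually_gt_atTop (-i).toNat] with M hM
    have : ¬ (i + (2 * M : ℕ) ≤ (M : ℤ)) := by push_cast; omega
    change (if i + (2 * M : ℕ) ≤ (M : ℤ) then _ else y (i + (2 * M : ℕ) - (2 * M : ℕ))) = y i
    rw [if_neg this, add_sub_cancel_right]
  have e1 := t1.eventually (a.isClopen.isOpen.mem_nhds hx)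
  have e2 := t2.eventually (a.isClopen.compl.isOpen.mem_nhds hy)
  obtain ⟨M, h1, h2⟩ := (e1.and e2).exists
  exact h2 (it _ _ h1)

theorem phi_ne_compl (a : CB) : phi a ≠ aᶜ := by
  intro h
  have h1 : (fun _ => false : Z2) ∈ phi a ↔ (fun _ => false : Z2) ∈ a := Iff.rfl
  have h2 : (fun _ => false : Z2) ∈ aᶜ ↔ (fun _ => false : Z2) ∉ a := Iff.rfl
  rw [h, h2] at h1
  tauto

theorem atomless_CB : Atomless CB := by
  intro a ha
  have hx : ∃ x, x ∈ a := by
    by_contra hh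
    push Not at hh
    exact ha (TopologicalSpace.Clopens.ext (Set.eq_empty_of_forall_notMem hh))
  obtain ⟨x, hx⟩ := hx
  let z : ℕ → Z2 := fun M => Function.update x M (!(x M))
  have t1 : Tendsto z atTop (𝓝 x) := by
    rw [tendsto_pi_nhds]
    intro i
    refine tendsto_nhds_of_eventually_eq ?_
    filter_upwards [eventually_gt_atTop i.toNat] with M hM
    have : i ≠ M := by omega
    simp [z, this]
  obtain ⟨M, hM⟩ := (t1.eventually (a.isClopen.isOpen.mem_nhds hx)).exists
  let c : CB := ⟨{w : Z2 | w M = x M}, by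
    have : {w : Z2 | w M = x M} = (fun w : Z2 => w M) ⁻¹' {x M} := rfl
    rw [this]
    exact (isClopen_discrete _).preimage (continuous_apply _)⟩
  refine ⟨a ⊓ c, ?_, lt_of_le_not_ge inf_le_left ?_⟩
  · intro h
    have : x ∈ (⊥ : CB) := by
      rw [← h]; exact ⟨hx, rfl⟩
    exact this
  · intro h
    have h1 : z M ∈ c := (h hM).2
    have h2 : z M M = x M := h1
    simp [z] at h2

theorem countable_CB : Countable CB :=
  TopologicalSpace.Clopens.countable_iff_secondCountable.2 inferInstance

theorem exists_psi (hCH : (2 : Cardinal.{0}) ^ Cardinal.aleph0 = Cardinal.aleph 1) :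
    ∃ ψ : PF ≃o PF, (∀ a, a ≤ ψ a → a = ⊥ ∨ a = ⊤) ∧ ∀ a, ψ a ≠ aᶜ := by
  let U : Ultrafilter ℕ := hyperfilter ℕ
  have hU : (U : Filter ℕ) ≤ atTop := by
    rw [← Nat.cofinite_eq_atTop]; exact hyperfilter_le_cofinite
  have := countable_CB
  have : Nontrivial CB := ⟨⟨⊥, ⊤, fun h => by
    have h1 : (fun _ => false : Z2) ∈ (⊤ : CB) := trivial
    rw [← h] at h1
    exact h1⟩⟩
  have c1 : Cardinal.mk (Germ (U : Filter ℕ) CB) ≤ Cardinal.aleph 1 := by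
    refine Cardinal.mk_quotient_le.trans ?_
    rw [← Cardinal.power_def, Cardinal.mk_nat, ← hCH,
      ← Cardinal.power_self_eq (le_refl Cardinal.aleph0)]
    exact Cardinal.power_le_power_right (Cardinal.mk_le_aleph0)
  have c2 : Cardinal.mk PF ≤ Cardinal.aleph 1 := by
    refine Cardinal.mk_quotient_le.trans ?_
    rw [← Cardinal.power_def, Cardinal.mk_nat, ← hCH, Cardinal.mk_Prop]
  obtain ⟨j⟩ := exists_iso (atomless_ultra U atomless_CB) atomless_PF
    (sat_of_diag (diag_ultra U hU CB)) sat_PF c1 c2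
  let Φ : Germ (U : Filter ℕ) CB ≃o Germ (U : Filter ℕ) CB :=
    { toFun := Germ.map phi
      invFun := Germ.map phi.symm
      left_inv := fun a => Germ.inductionOn a fun f => by simp [Germ.map_coe, Function.comp_def]
      right_inv := fun a => Germ.inductionOn a fun f => by simp [Germ.map_coe, Function.comp_def]
      map_rel_iff' := fun {a b} => Germ.inductionOn₂ a b fun f g => by
        change (∀ᶠ k in (U : Filter ℕ), phi (f k) ≤ phi (g k)) ↔
          (∀ᶠ k in (U : Filter ℕ), (f k) ≤ (g k))
        simp }
  have p1 : ∀ a, a ≤ Φ a → a = ⊥ ∨ a = ⊤ := by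
    intro a
    refine Germ.inductionOn a fun f hf => ?_
    have hf : ∀ᶠ k in (U : Filter ℕ), f k ≤ phi (f k) := hf
    have := Ultrafilter.eventually_or.1 (hf.mono fun k hk => phi_trans _ hk)
    rcases this with h | h
    · exact Or.inl (Germ.coe_eq.2 h)
    · exact Or.inr (Germ.coe_eq.2 h)
  have p2 : ∀ a, Φ a ≠ aᶜ := by
    intro a
    refine Germ.inductionOn a fun f hf => ?_
    have hf : ∀ᶠ k in (U : Filter ℕ), phi (f k) = (f k)ᶜ := Germ.coe_eq.1 hf
    obtain ⟨k, hk⟩ := hf.exists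
    exact phi_ne_compl _ hk
  refine ⟨j.symm.trans (Φ.trans j), fun a ha => ?_, fun a ha => ?_⟩
  · have h1 : j.symm a ≤ Φ (j.symm a) := by
      rw [← j.le_iff_le]; simpa using ha
    rcases p1 _ h1 with h | h
    · left; simpa using h
    · right; simpa using h
  · apply p2 (j.symm a)
    apply j.injective
    rw [map_compl']
    simpa using ha

/-! Stone duality for `ℕ*` -/

def M (p : ↥NStar) (a : PF) : Prop := ∃ f : ℕ → Prop, (f : PF) = a ∧ ∀ᶠ k in (p.1 : Filter ℕ), f k

theorem M_coe (p : ↥NStar) (f : ℕ → Prop) : M p (f : PF) ↔ ∀ᶠ k in (p.1 : Filter ℕ), f k := by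
  constructor
  · rintro ⟨g, hg, h⟩
    have h1 : g =ᶠ[cofinite] f := Germ.coe_eq.1 hg
    have h2 : ∀ᶠ k in (p.1 : Filter ℕ), g k = f k := h1.filter_mono p.2
    filter_upwards [h, h2] with k hk hk2
    rwa [← hk2]
  · exact fun h => ⟨f, rfl, h⟩

theorem M_compl (p : ↥NStar) (a : PF) : M p aᶜ ↔ ¬ M p a := by
  refine Germ.inductionOn a fun f => ?_
  rw [germ_compl, M_coe, M_coe, ← Ultrafilter.eventually_not]
  rfl

theorem M_inf (p : ↥NStar) (a b : PF) : M p (a ⊓ b) ↔ M p a ∧ M p b := by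
  refine Germ.inductionOn₂ a b fun f g => ?_
  rw [germ_inf, M_coe, M_coe, M_coe, ← Filter.eventually_and]
  rfl

theorem M_top (p : ↥NStar) : M p ⊤ :=
  (M_coe p (fun _ => True)).2 (Eventually.of_forall fun _ => trivial)

theorem M_bot (p : ↥NStar) : ¬ M p ⊥ := by
  rw [← compl_top, M_compl]; exact fun h => h (M_top p)

theorem M_sup (p : ↥NStar) (a b : PF) : M p (a ⊔ b) ↔ M p a ∨ M p b := by
  have h : a ⊔ b = (aᶜ ⊓ bᶜ)ᶜ := by rw [compl_inf, compl_compl, compl_compl]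
  rw [h, M_compl, M_inf, M_compl, M_compl]
  tauto

theorem M_mono (p : ↥NStar) {a b : PF} (h : a ≤ b) (ha : M p a) : M p b := by
  rw [← sup_eq_right.2 h, M_sup]; exact Or.inl ha

theorem exists_M (a : PF) (ha : a ≠ ⊥) : ∃ p, M p a := by
  revert ha
  refine Germ.inductionOn a fun f hf => ?_
  have hne : NeBot ((cofinite : Filter ℕ) ⊓ 𝓟 {k | f k}) := by
    rw [← Filter.frequently_mem_iff_neBot]
    intro h
    apply hf
    exact le_bot_iff.1 ((pf_le f (fun _ => False)).2 h)
  refine ⟨⟨Ultrafilter.of ((cofinite : Filter ℕ) ⊓ 𝓟 {k | f k}),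
    (Ultrafilter.of_le _).trans inf_le_left⟩, (M_coe _ _).2 ?_⟩
  exact (Ultrafilter.of_le _).trans inf_le_right (mem_principal_self _)

theorem le_of_M {a b : PF} (h : ∀ p, M p a → M p b) : a ≤ b := by
  by_contra hn
  obtain ⟨p, hp⟩ := exists_M (a ⊓ bᶜ) (by
    rw [← _root_.sdiff_eq, Ne, sdiff_eq_bot_iff]; exact hn)
  rw [M_inf, M_compl] at hp
  exact hp.2 (h p hp.1)

theorem ext_M {p q : ↥NStar} (h : ∀ a, M p a ↔ M q a) : p = q := by
  apply Subtype.ext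
  apply Ultrafilter.coe_injective
  ext s
  have := h ((fun k => k ∈ s : ℕ → Prop) : PF)
  rw [M_coe, M_coe] at this
  exact this

/-- the class of a set -/
def cl (s : Set ℕ) : PF := ((fun k => k ∈ s : ℕ → Prop) : PF)

theorem M_cl (p : ↥NStar) (s : Set ℕ) : M p (cl s) ↔ s ∈ p.1 := M_coe p _

theorem cl_compl (s : Set ℕ) : cl sᶜ = (cl s)ᶜ := rfl

theorem cl_inter (s t : Set ℕ) : cl (s ∩ t) = cl s ⊓ cl t := rfl

theorem exists_cl (a : PF) : ∃ s, cl s = a := by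
  refine Germ.inductionOn a fun f => ⟨{k | f k}, rfl⟩

theorem exists_dual (ψ : PF ≃o PF) (p : ↥NStar) : ∃ q : ↥NStar, ∀ a, M q a ↔ M p (ψ a) := by
  let F : Filter ℕ :=
    { sets := {s | M p (ψ (cl s))}
      univ_sets := by
        have h : cl univ = ⊤ := rfl
        change M p (ψ (cl univ))
        rw [h, OrderIso.map_top]; exact M_top p
      sets_of_superset := by
        intro s t hs hst
        refine M_mono p (ψ.monotone ?_) hs
        exact (pf_le _ _).2 (Eventually.of_forall hst)
      inter_sets := by
        intro s t hs ht
        change M p (ψ (cl (s ∩ t)))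
        rw [cl_inter, OrderIso.map_inf, M_inf]
        exact ⟨hs, ht⟩ }
  have hF : ∀ s, s ∈ F ↔ M p (ψ (cl s)) := fun s => Iff.rfl
  let q : Ultrafilter ℕ := Ultrafilter.ofComplNotMemIff F (by
    intro s
    rw [hF, hF, cl_compl, map_compl', M_compl, not_not])
  have hq : ∀ s, s ∈ q ↔ M p (ψ (cl s)) := fun s => Iff.rfl
  have hqN : q ∈ NStar := by
    intro s hs
    change s ∈ q
    rw [hq]
    have : cl s = ⊤ := top_le_iff.1 ((pf_le (fun _ => True) _).2 (by
      filter_upwards [hs] with k hk _ using hk))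
    rw [this, OrderIso.map_top]; exact M_top p
  refine ⟨⟨q, hqN⟩, fun a => ?_⟩
  obtain ⟨s, rfl⟩ := exists_cl a
  rw [M_cl]
  exact hq s

theorem isClopen_M (a : PF) : IsClopen {p : ↥NStar | M p a} := by
  obtain ⟨s, rfl⟩ := exists_cl a
  have : {p : ↥NStar | M p (cl s)} = Subtype.val ⁻¹' {u : Ultrafilter ℕ | s ∈ u} := by
    ext p; exact M_cl p s
  rw [this]
  exact ⟨(ultrafilter_isClosed_basic s).preimage continuous_subtype_val,
    (ultrafilter_isOpen_basic s).preimage continuous_subtype_val⟩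

theorem exists_nhd {V : Set ↥NStar} (hV : IsOpen V) {p : ↥NStar} (hp : p ∈ V) :
    ∃ a, M p a ∧ ∀ q, M q a → q ∈ V := by
  obtain ⟨W, hW, rfl⟩ := isOpen_induced_iff.1 hV
  obtain ⟨_, ⟨s, rfl⟩, h1, h2⟩ := ultrafilterBasis_is_basis.exists_subset_of_mem_open hp hW
  exact ⟨cl s, (M_cl _ _).2 h1, fun q hq => h2 ((M_cl _ _).1 hq)⟩

theorem cont_of {t : ↥NStar → ↥NStar} (ψ : PF → PF) (h : ∀ p a, M (t p) a ↔ M p (ψ a)) :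
    Continuous t := by
  rw [continuous_def]
  intro V hV
  rw [isOpen_iff_mem_nhds]
  intro p hp
  obtain ⟨a, ha, haV⟩ := exists_nhd hV hp
  refine Filter.mem_of_superset ((isClopen_M (ψ a)).isOpen.mem_nhds ((h p a).1 ha)) ?_
  intro q hq
  exact haV _ ((h q a).2 hq)

theorem exists_homeo (ψ : PF ≃o PF) : ∃ τ : ↥NStar ≃ₜ ↥NStar, ∀ p a, M (τ p) a ↔ M p (ψ a) := by
  choose t ht using exists_dual ψ
  choose t' ht' using exists_dual ψ.symm
  exact ⟨{ toFun := t
           invFun := t'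
           left_inv := fun p => ext_M fun a => by rw [ht', ht]; simp
           right_inv := fun p => ext_M fun a => by rw [ht, ht']; simp
           continuous_toFun := cont_of ψ ht
           continuous_invFun := cont_of ψ.symm ht' }, ht⟩

theorem compact_NStar : CompactSpace ↥NStar := by
  rw [← isCompact_iff_compactSpace]
  apply IsClosed.isCompact
  have : NStar = ⋂ s ∈ (cofinite : Filter ℕ), {u : Ultrafilter ℕ | s ∈ u} := by
    ext u
    simp only [mem_iInter]
    exact Iff.rfl
  rw [this]
  exact isClosed_biInter fun s _ => ultrafilter_isClosed_basic s

theorem exists_of_clopen {C : Set ↥NStar} (hC : IsClopen C) : ∃ a, ∀ p, p ∈ C ↔ M p a := by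
  classical
  have := compact_NStar
  have h1 : ∀ p : ↥NStar, ∃ a, p ∈ C → M p a ∧ ∀ q, M q a → q ∈ C := by
    intro p
    by_cases hp : p ∈ C
    · obtain ⟨a, ha⟩ := exists_nhd hC.isOpen hp
      exact ⟨a, fun _ => ha⟩
    · exact ⟨⊥, fun h => (hp h).elim⟩
  choose a ha using h1
  obtain ⟨t, ht, ht2⟩ := hC.isClosed.isCompact.elim_nhds_subcover (fun p => {q | M q (a p)})
    (fun p hp => (isClopen_M (a p)).isOpen.mem_nhds (ha p hp).1)
  have key : ∀ (t : Finset ↥NStar) p, M p (t.sup a) ↔ ∃ q ∈ t, M p (a q) := by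
    intro t p
    induction t using Finset.induction_on with
    | empty => simp [M_bot]
    | insert q t _ ih => rw [Finset.sup_insert, M_sup, ih]; simp
  refine ⟨t.sup a, fun p => ?_⟩
  rw [key]
  constructor
  · intro hp
    have := ht2 hp
    simpa using this
  · rintro ⟨q, hq, hp⟩
    exact (ha q (ht q hq)).2 p hp

theorem chain_of_rel {X : Type*} {S : X → X → Prop} {x y : X} (h : Relation.ReflTransGen S x y) :
    ∃ (n : ℕ) (c : ℕ → X), c 0 = x ∧ c n = y ∧ ∀ i < n, S (c i) (c (i + 1)) := by
  induction h with
  | refl => exact ⟨0, fun _ => x, rfl, rfl, by simp⟩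
  | @tail y z _ hyz ih =>
    obtain ⟨n, c, h0, hn, hc⟩ := ih
    refine ⟨n + 1, fun i => if i ≤ n then c i else z, by simp [h0], by simp, fun i hi => ?_⟩
    by_cases h : i < n
    · have h1 : i ≤ n := h.le
      have h2 : i + 1 ≤ n := h
      simp only [h1, h2, if_true]
      exact hc i h
    · have : i = n := by omega
      subst this
      simp [hn, hyz]

theorem chain_transitive (ψ : PF ≃o PF) (hψ : ∀ a, a ≤ ψ a → a = ⊥ ∨ a = ⊤)
    (τ : ↥NStar ≃ₜ ↥NStar) (hτ : ∀ p a, M (τ p) a ↔ M p (ψ a)) : ChainTransitive (⇑τ) := by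
  classical
  have := compact_NStar
  intro 𝒰 hop hcov x y
  have h1 : ∀ p : ↥NStar, ∃ a, ∃ V ∈ 𝒰, M p a ∧ ∀ q, M q a → q ∈ V := by
    intro p
    obtain ⟨V, hV, hp⟩ : p ∈ ⋃₀ 𝒰 := by rw [hcov]; trivial
    obtain ⟨a, ha⟩ := exists_nhd (hop V hV) hp
    exact ⟨a, V, hV, ha⟩
  choose a V hV ha haV using h1
  obtain ⟨t, _, ht⟩ := isCompact_univ.elim_nhds_subcover (fun p : ↥NStar => {q | M q (a p)})
    (fun p _ => (isClopen_M (a p)).isOpen.mem_nhds (ha p))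
  let S : ↥NStar → ↥NStar → Prop := fun w z => ∀ p ∈ t, (M (τ w) (a p) ↔ M z (a p))
  have hS : ∀ w z, S w z → ∃ V ∈ 𝒰, τ w ∈ V ∧ z ∈ V := by
    intro w z h
    have := ht (mem_univ (τ w))
    simp only [mem_iUnion] at this
    obtain ⟨p, hp, hw⟩ := this
    exact ⟨V p, hV p, haV p _ hw, haV p _ ((h p hp).1 hw)⟩
  let E : Set ↥NStar := {z | Relation.TransGen S x z}
  have hsat : ∀ z z', (∀ p ∈ t, (M z (a p) ↔ M z' (a p))) → z ∈ E → z' ∈ E := by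
    intro z z' h hz
    obtain ⟨w, hw, hwz⟩ := Relation.TransGen.tail'_iff.1 hz
    exact Relation.TransGen.tail' hw fun p hp => (hwz p hp).trans (h p hp)
  have hnb : ∀ z, ∀ᶠ z' in 𝓝 z, ∀ p ∈ t, (M z (a p) ↔ M z' (a p)) := by
    intro z
    refine (Filter.eventually_all_finset t).2 fun p _ => ?_
    by_cases hz : M z (a p)
    · filter_upwards [(isClopen_M (a p)).isOpen.mem_nhds hz] with z' hz'
      exact ⟨fun _ => hz', fun _ => hz⟩
    · filter_upwards [(isClopen_M (a p)).compl.isOpen.mem_nhds hz] with z' hz'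
      exact ⟨fun h => (hz h).elim, fun h => (hz' h).elim⟩
  have hE : IsClopen E := by
    refine ⟨⟨?_⟩, ?_⟩
    · rw [isOpen_iff_mem_nhds]
      intro z hz
      filter_upwards [hnb z] with z' hz' hE
      exact hz (hsat z' z (fun p hp => (hz' p hp).symm) hE)
    · rw [isOpen_iff_mem_nhds]
      intro z hz
      filter_upwards [hnb z] with z' hz'
      exact hsat z z' hz' hz
  obtain ⟨e, he⟩ := exists_of_clopen hE
  have hx : τ x ∈ E := Relation.TransGen.single fun p _ => Iff.rfl
  have hle : e ≤ ψ e := by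
    refine le_of_M fun p hp => ?_
    rw [← hτ, ← he]
    exact Relation.TransGen.tail ((he p).2 hp) fun p _ => Iff.rfl
  have hy : y ∈ E := by
    rcases hψ e hle with h | h
    · exact (M_bot (τ x) (h ▸ (he _).1 hx)).elim
    · rw [he, h]; exact M_top y
  obtain ⟨n, c, h0, hn, hc⟩ := chain_of_rel (Relation.TransGen.to_reflTransGen hy)
  exact ⟨n, c, h0, hn, fun i hi => hS _ _ (hc i hi)⟩

theorem shift_even (p : ↥NStar) : {k | Even k} ∈ (shiftStar p).1 ↔ {k | Even k} ∉ p.1 := by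
  have h : {k | Even k} ∈ (shiftStar p).1 ↔ {k | Even k}ᶜ ∈ p.1 := by
    have : {k | Even k}ᶜ = (fun k : ℕ => k + 1) ⁻¹' {k | Even k} := by
      ext k
      simp [Nat.even_add_one]
    rw [this]
    exact Iff.rfl
  rw [h, Ultrafilter.compl_mem_iff_notMem]

theorem main0 (hCH : (2 : Cardinal.{0}) ^ Cardinal.aleph0 = Cardinal.aleph 1) :
    ∃ τ : ↥NStar ≃ₜ ↥NStar, ChainTransitive (⇑τ) ∧
      ¬ ∃ h : ↥NStar ≃ₜ ↥NStar, ∀ p : ↥NStar, h (shiftStar p) = τ (h p) := by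
  obtain ⟨ψ, h1, h2⟩ := exists_psi hCH
  obtain ⟨τ, hτ⟩ := exists_homeo ψ
  refine ⟨τ, chain_transitive ψ h1 τ hτ, ?_⟩
  rintro ⟨h, hh⟩
  obtain ⟨c, hc⟩ := exists_of_clopen ((isClopen_M (cl {k | Even k})).preimage h.symm.continuous)
  have hc' : ∀ p, M (h p) c ↔ {k | Even k} ∈ p.1 := by
    intro p
    rw [← hc, ← M_cl]
    change M (h.symm (h p)) _ ↔ _
    rw [h.symm_apply_apply]
  have key : ∀ q, M q (ψ c) ↔ M q cᶜ := by
    intro q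
    obtain ⟨p, rfl⟩ := h.surjective q
    rw [M_compl, ← hτ, ← hh, hc', hc', shift_even]
  exact h2 c (le_antisymm (le_of_M fun p => (key p).1) (le_of_M fun p => (key p).2))

end P19

/-- Under CH (`2^ℵ₀ = ℵ₁`) there is a chain transitive
autohomeomorphism `τ` of `ℕ*` not isomorphic to the shift `(ℕ*, σ)`. -/
theorem stmt19 (hCH : (2 : Cardinal) ^ Cardinal.aleph0 = Cardinal.aleph 1) :
    ∃ τ : ↥NStar ≃ₜ ↥NStar, ChainTransitive (⇑τ) ∧
      ¬ ∃ h : ↥NStar ≃ₜ ↥NStar, ∀ p : ↥NStar, h (shiftStar p) = τ (h p) := by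
  apply P19.main0
  apply Cardinal.lift_injective
  simpa using hCH

end
end
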